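/- For p ≥ q ≥ 1 and x_{p,q} a permutation in A_{2(p+q)} that is a product of two disjoint cycles of lengths 2p and 2q, the number of minimal factorizations of x_{p,q} into ℓ_3(x_{p,q}) = p+q many 3-cycles is 2(p+q-1)!(2p)^p (2q)^q / ((p-1)!(q-1)!). -/

import Mathlib

open Equiv Equiv.Perm

/-- The word length of `x` with respect to a generating set `T`. -/
noncomputable def lenT {G : Type*} [Group G] (T : Set G) (x : G) : ℕ :=
  sInf {n | ∃ l : List G, (∀ t ∈ l, t ∈ T) ∧ l.prod = x ∧ l.length = n}

/-- The `T`-prefix order. -/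
def leT {G : Type*} [Group G] (T : Set G) (x y : G) : Prop :=
  lenT T y = lenT T x + lenT T (x⁻¹ * y)

/-- The set of 3-cycles of the symmetric group on `Fin N`. -/
def threeCycles (N : ℕ) : Set (Perm (Fin N)) := {σ | σ.IsThreeCycle}

/-- The set of transpositions of the symmetric group on `Fin N`. -/
def transpositions (N : ℕ) : Set (Perm (Fin N)) := {σ | σ.IsSwap}

/-- The number of odd cycles of a permutation, counting fixed points. -/
def ocyc {N : ℕ} (x : Perm (Fin N)) : ℕ :=
  (x.cycleType.filter (fun n => Odd n)).card + (N - x.cycleType.sum)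

/-!
Let `ρ x` be the number of odd cycles of a permutation `x` of `α`, fixed points included.
Multiplying by a 3-cycle raises `ρ` by at most two, so at least `(card α - ρ x) / 2` factors are
needed, and in a factorization of exactly that length `m` every factor `t` stripped off raises `ρ`
by two. Such a `t` either splits a cycle into three, at least two of them odd, or moves a piece of
an even cycle to another even cycle, leaving two odd cycles. The number of even cycles therefore
stays the same or drops by two, so permutations with zero or two even cycles form a closed family.
There the number of factorizations is `m!` times a product of weights of the cycle lengths, with a
correction factor `4 / (k + l)` for two even cycles of lengths `k` and `l`. By induction on `m`
this amounts to a recursion for the weights. For an odd cycle it is the Abel identity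
`∑ A i x * A j y = A n (x + y)`, summed over `i + j = n`. For the pair of even cycles it is a
bilinear identity between the numbers `k ^ k / k!` and the Abel terms, which follows from partial
fractions and the binomial theorem.
-/

namespace ThreeCycleFactorization

open Finset
open Function hiding swap
open scoped Nat

/-! ### Abel identities -/

section Antidiagonal

variable {M : Type*} [AddCommMonoid M]

theorem sum_antidiagonal_assoc (n : ℕ) (f : ℕ → ℕ → ℕ → M) :
    ∑ i ∈ antidiagonal n, ∑ j ∈ antidiagonal i.2, f i.1 j.1 j.2 =
      ∑ i ∈ antidiagonal n, ∑ j ∈ antidiagonal i.1, f j.1 j.2 i.2 := by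
  rw [sum_sigma', sum_sigma']
  refine sum_nbij' (fun s => ⟨(s.1.1 + s.2.1, s.2.2), (s.1.1, s.2.1)⟩)
    (fun s => ⟨(s.2.1, s.2.2 + s.1.2), (s.2.2, s.1.2)⟩) ?_ ?_ ?_ ?_ fun _ _ => rfl
  all_goals
    rintro ⟨⟨a, b⟩, ⟨c, d⟩⟩ h
    simp only [mem_sigma, HasAntidiagonal.mem_antidiagonal] at h ⊢
    obtain ⟨rfl, rfl⟩ := h
    first | rfl | exact ⟨by ring, trivial⟩

end Antidiagonal

section AbelIdentities

variable {K : Type*} [Field K] [CharZero K]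

theorem sum_antidiagonal_pow_div_factorial (a b : K) (n : ℕ) :
    ∑ i ∈ antidiagonal n, a ^ i.1 / i.1 ! * (b ^ i.2 / i.2 !) = (a + b) ^ n / n ! := by
  rw [(Commute.all a b).add_pow', sum_div]
  refine sum_congr rfl fun i hi => ?_
  rw [← HasAntidiagonal.mem_antidiagonal.1 hi, nsmul_eq_mul, Nat.cast_add_choose]
  have := Nat.factorial_ne_zero (i.1 + i.2)
  field_simp

theorem sum_antidiagonal_neg_one_pow_mul (f : K → K) (n : ℕ) (y : K) :
    ∑ i ∈ antidiagonal n, (-1) ^ i.2 / (i.1 ! * i.2 !) * f (y + i.1) =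
      (fwdDiff 1)^[n] f y / n ! := by
  rw [fwdDiff_iter_eq_sum_shift, ← Nat.sum_antidiagonal_eq_sum_range_succ
    (fun k l => ((-1 : ℤ) ^ l * (n.choose k : ℤ)) • f (y + k • 1)), sum_div]
  refine sum_congr rfl fun i hi => ?_
  rw [← HasAntidiagonal.mem_antidiagonal.1 hi, zsmul_eq_mul, nsmul_one]
  push_cast
  rw [Nat.cast_add_choose]
  have := Nat.factorial_ne_zero (i.1 + i.2)
  field_simp

theorem sum_antidiagonal_neg_one_pow_mul_eval {P : Polynomial K} {n : ℕ} (hP : P.degree < n) :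
    ∑ i ∈ antidiagonal n, (-1) ^ i.2 / (i.1 ! * i.2 !) * P.eval (i.1 : K) = 0 := by
  rcases eq_or_ne P 0 with rfl | hP0
  · simp
  · simpa [Polynomial.fwdDiff_iter_eq_zero_of_degree_lt
      ((Polynomial.natDegree_lt_iff_degree_lt hP0).2 hP)] using
      sum_antidiagonal_neg_one_pow_mul P.eval n 0

theorem fwdDiff_iter_inv (n q : ℕ) :
    (fwdDiff 1)^[n] (fun x : K => x⁻¹) (q + 1) = (-1) ^ n * n ! * q ! / (q + n + 1)! := by
  induction n generalizing q with
  | zero =>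
    have := Nat.factorial_ne_zero q
    have := Nat.cast_add_one_ne_zero (R := K) q
    simp only [iterate_zero, id_eq, pow_zero, Nat.factorial_zero, add_zero,
      Nat.factorial_succ]
    push_cast
    field_simp
  | succ n ih =>
    have hshift := ih (q + 1)
    have : (q + n + 1 + 1 : K) ≠ 0 := mod_cast Nat.cast_add_one_ne_zero (R := K) (q + n + 1)
    have := Nat.factorial_ne_zero (q + n + 1)
    push_cast at hshift
    rw [iterate_succ_apply', fwdDiff, hshift, ih, show q + 1 + n + 1 = q + n + 1 + 1 by ring,
      show q + (n + 1) + 1 = q + n + 1 + 1 by ring, Nat.factorial_succ (q + n + 1),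
      Nat.factorial_succ q, Nat.factorial_succ n]
    push_cast
    field_simp
    ring

theorem sum_antidiagonal_neg_one_pow_mul_eval_div {P : Polynomial K} {n : ℕ} (hP : P.degree ≤ n)
    (q : ℕ) :
    ∑ i ∈ antidiagonal n,
        (-1) ^ i.2 / (i.1 ! * i.2 !) * (P.eval (i.1 : K) / (i.1 + (q + 1))) =
      (-1) ^ n * P.eval (-(q + 1) : K) * q ! / (q + n + 1)! := by
  set c : K := -(q + 1) with hc
  set Q := P /ₘ (Polynomial.X - Polynomial.C c) with hQ
  have hQdeg : Q.degree < n := by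
    rcases eq_or_ne P 0 with rfl | hP0
    · simp [hQ]
    · exact (Polynomial.degree_divByMonic_lt _ _ hP0 (by simp)).trans_le hP
  have hdiv (i : ℕ) :
      P.eval (i : K) / (i + (q + 1)) = Q.eval (i : K) + P.eval c * (q + 1 + i : K)⁻¹ := by
    have hne : (i + (q + 1) : K) ≠ 0 := mod_cast Nat.cast_add_one_ne_zero (R := K) (i + q)
    have hmod := congrArg (Polynomial.eval (i : K))
      (Polynomial.modByMonic_add_div P (Polynomial.X - Polynomial.C c))
    rw [Polynomial.modByMonic_X_sub_C_eq_C_eval] at hmod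
    simp only [Polynomial.eval_add, Polynomial.eval_mul, Polynomial.eval_sub, Polynomial.eval_C,
      Polynomial.eval_X] at hmod
    rw [add_comm (q + 1 : K), ← hmod, hc]
    field_simp
    ring
  have hinv := sum_antidiagonal_neg_one_pow_mul (fun x : K => x⁻¹) n (q + 1)
  have := Nat.factorial_ne_zero n
  simp only [hdiv, mul_add, sum_add_distrib, mul_left_comm _ (P.eval c), ← mul_sum]
  rw [sum_antidiagonal_neg_one_pow_mul_eval hQdeg, hinv, fwdDiff_iter_inv]
  field_simp
  ring

/-- The terms `x (x + n z) ^ (n - 1) / n!` of Abel's binomial identities. Treating `n = 0`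
separately gives it the value `1` for all `x`, including `x = 0`. -/
def abelTerm (z x : K) : ℕ → K
  | 0 => 1
  | n + 1 => x * (x + (n + 1) * z) ^ n / (n + 1)!

theorem abelTerm_mul_pow (z x : K) {k l m : ℕ} (h : k + l = m + 1) :
    abelTerm z x k * (x + k * z) ^ l = x * (x + k * z) ^ m / k ! := by
  cases k with
  | zero =>
    obtain rfl : l = m + 1 := by omega
    simp [abelTerm, pow_succ']
  | succ k =>
    obtain rfl : m = k + l := by omega
    simp only [abelTerm, pow_add]
    push_cast
    ring

theorem sum_antidiagonal_abelTerm_mul_neg_pow (z x : K) {n : ℕ} (hn : n ≠ 0) :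
    ∑ i ∈ antidiagonal n, abelTerm z x i.1 * ((-(x + i.1 * z)) ^ i.2 / i.2 !) = 0 := by
  obtain ⟨m, rfl⟩ := Nat.exists_eq_add_one_of_ne_zero hn
  have hdeg :
      ((Polynomial.C z * Polynomial.X + Polynomial.C x) ^ m).degree < ((m + 1 : ℕ) : WithBot ℕ) :=
    (Polynomial.degree_pow_le_of_le m Polynomial.degree_linear_le).trans_lt
      (by rw [mul_one]; exact Nat.cast_lt.2 m.lt_succ_self)
  rw [← mul_zero x, ← sum_antidiagonal_neg_one_pow_mul_eval hdeg, mul_sum]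
  refine sum_congr rfl fun i hi => ?_
  have hpow := abelTerm_mul_pow z x (HasAntidiagonal.mem_antidiagonal.1 hi)
  simp only [Polynomial.eval_pow, Polynomial.eval_add, Polynomial.eval_mul, Polynomial.eval_C,
    Polynomial.eval_X, neg_pow (x + _)]
  rw [add_comm (z * _), mul_comm z]
  linear_combination (-1) ^ i.2 / (i.2 ! : K) * hpow

theorem sum_antidiagonal_abelTerm_mul_pow (z x y : K) (n : ℕ) :
    ∑ i ∈ antidiagonal n, abelTerm z x i.1 * ((y + i.2 * z) ^ i.2 / i.2 !) =
      (x + y + n * z) ^ n / n ! := by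
  set s := x + y + n * z with hs
  have expand : ∀ i ∈ antidiagonal n, abelTerm z x i.1 * ((y + i.2 * z) ^ i.2 / i.2 !) =
      ∑ j ∈ antidiagonal i.2,
        abelTerm z x i.1 * ((-(x + i.1 * z)) ^ j.1 / j.1 !) * (s ^ j.2 / j.2 !) := fun i hi => by
    simp_rw [mul_assoc]
    rw [← mul_sum, sum_antidiagonal_pow_div_factorial, hs, ← HasAntidiagonal.mem_antidiagonal.1 hi]
    congr 3
    push_cast
    ring
  rw [sum_congr rfl expand, sum_antidiagonal_assoc n fun a b c =>
    abelTerm z x a * ((-(x + a * z)) ^ b / b !) * (s ^ c / c !)]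
  simp_rw [← sum_mul]
  rw [sum_eq_single_of_mem (0, n) (by simp)]
  · simp [abelTerm]
  · rintro ⟨a, b⟩ hab hne
    have ha : a ≠ 0 := by rintro rfl; simp_all
    rw [sum_antidiagonal_abelTerm_mul_neg_pow z x ha, zero_mul]

theorem abelTerm_succ (z y : K) (n : ℕ) :
    abelTerm z y (n + 1) =
      (y + (n + 1 : ℕ) * z) ^ (n + 1) / (n + 1)! - z * ((y + z + n * z) ^ n / n !) := by
  have := Nat.factorial_ne_zero n
  have := Nat.cast_add_one_ne_zero (R := K) n
  rw [abelTerm, Nat.factorial_succ]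
  push_cast
  field_simp
  ring

theorem sum_antidiagonal_abelTerm_mul_abelTerm (z x y : K) (n : ℕ) :
    ∑ i ∈ antidiagonal n, abelTerm z x i.1 * abelTerm z y i.2 = abelTerm z (x + y) n := by
  cases n with
  | zero => simp [abelTerm]
  | succ n =>
    have first := sum_antidiagonal_abelTerm_mul_pow z x y (n + 1)
    have second := sum_antidiagonal_abelTerm_mul_pow z x (y + z) n
    rw [Nat.sum_antidiagonal_succ'] at first ⊢
    simp only [abelTerm_succ z y, mul_sub, sum_sub_distrib, mul_left_comm _ z, ← mul_sum]
    rw [second, abelTerm_succ z (x + y), ← first, ← add_assoc x y z]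
    simp only [abelTerm, Nat.cast_zero, pow_zero, Nat.factorial_zero, Nat.cast_one, div_one]
    ring

theorem add_pow_div_factorial_eq_sum_add_sum (a b : K) (p q : ℕ) :
    (a + b) ^ (p + q + 1) / (p + q + 1)! =
      ∑ i ∈ antidiagonal p, a ^ i.1 / i.1 ! * (b ^ (q + 1 + i.2) / (q + 1 + i.2)!) +
        ∑ i ∈ antidiagonal q, b ^ i.1 / i.1 ! * (a ^ (p + 1 + i.2) / (p + 1 + i.2)!) := by
  rw [← sum_antidiagonal_pow_div_factorial, Nat.sum_antidiagonal_eq_sum_range_succ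
      (fun k l => a ^ k / k ! * (b ^ l / l !)),
    show (p + q + 1).succ = (p + 1) + (q + 1) by omega, sum_range_add,
    Nat.sum_antidiagonal_eq_sum_range_succ
      (fun k l => a ^ k / k ! * (b ^ (q + 1 + l) / (q + 1 + l)!)),
    ← Nat.sum_antidiagonal_swap (n := q)]
  simp only [Prod.fst_swap, Prod.snd_swap]
  rw [Nat.sum_antidiagonal_eq_sum_range_succ
    (fun k l => b ^ l / l ! * (a ^ (p + 1 + k) / (p + 1 + k)!))]
  congr 1 <;> refine sum_congr rfl fun i hi => ?_ <;> rw [mem_range] at hi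
  · rw [show p + q + 1 - i = q + 1 + (p - i) by omega]
  · rw [show p + q + 1 - (p + 1 + i) = q - i by omega, mul_comm]

end AbelIdentities

section SelfPow

/-- The numbers `k ^ k / k!`, the coefficients of `1 / (1 - T)` where `T = z exp T` is the
exponential generating function of rooted trees. -/
def selfPow (k : ℕ) : ℚ := (k : ℚ) ^ k / k !

theorem mul_sum_antidiagonal_succ_pow_mul_selfPow_div (p q : ℕ) :
    (q + 1) * selfPow (q + 1) * ∑ i ∈ antidiagonal p,
        (i.1 + 1 : ℚ) ^ i.1 / i.1 ! * (selfPow i.2 / (i.2 + (q + 1))) =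
      ∑ i ∈ antidiagonal p,
        (p + 1 : ℚ) ^ i.1 / i.1 ! * ((q + 1) ^ (q + 1 + i.2) / (q + 1 + i.2)!) := by
  have expand : ∀ i ∈ antidiagonal p,
      (i.2 + 1 : ℚ) ^ i.2 / i.2 ! * (selfPow i.1 / (i.1 + (q + 1))) =
        ∑ j ∈ antidiagonal i.2, (-(i.1 : ℚ)) ^ j.1 / j.1 ! * ((p + 1) ^ j.2 / j.2 !) *
          (selfPow i.1 / (i.1 + (q + 1))) := fun i hi => by
    rw [← sum_mul, sum_antidiagonal_pow_div_factorial, ← HasAntidiagonal.mem_antidiagonal.1 hi]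
    congr 3
    push_cast
    ring
  rw [← Nat.sum_antidiagonal_swap]
  simp only [Prod.fst_swap, Prod.snd_swap]
  rw [sum_congr rfl expand, sum_antidiagonal_assoc p fun a b c =>
    (-(a : ℚ)) ^ b / b ! * ((p + 1) ^ c / c !) * (selfPow a / (a + (q + 1))),
    mul_sum, ← Nat.sum_antidiagonal_swap]
  refine sum_congr rfl fun i _ => ?_
  have inner : ∀ k ∈ antidiagonal i.2, (-(k.1 : ℚ)) ^ k.2 / k.2 ! * ((p + 1) ^ i.1 / i.1 !) *
      (selfPow k.1 / (k.1 + (q + 1))) = (p + 1 : ℚ) ^ i.1 / i.1 ! *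
        ((-1) ^ k.2 / (k.1 ! * k.2 !) *
          ((Polynomial.X ^ i.2 : Polynomial ℚ).eval (k.1 : ℚ) / (k.1 + (q + 1)))) := fun k hk => by
    rw [Polynomial.eval_pow, Polynomial.eval_X, ← HasAntidiagonal.mem_antidiagonal.1 hk, neg_pow,
      pow_add, selfPow]
    ring
  have := Nat.factorial_ne_zero q
  simp only [Prod.fst_swap, Prod.snd_swap]
  rw [sum_congr rfl inner, ← mul_sum,
    sum_antidiagonal_neg_one_pow_mul_eval_div (Polynomial.degree_X_pow_le _),
    Polynomial.eval_pow, Polynomial.eval_X, add_right_comm q, ← mul_pow, neg_one_mul, neg_neg,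
    selfPow, Nat.factorial_succ]
  push_cast
  field_simp
  ring

theorem selfPow_succ (p : ℕ) :
    selfPow (p + 1) = ∑ i ∈ antidiagonal p, abelTerm 1 1 i.1 * selfPow i.2 := by
  have habel := sum_antidiagonal_abelTerm_mul_pow (1 : ℚ) 1 0 p
  simp only [zero_add, mul_one, add_zero] at habel
  simp only [selfPow]
  rw [habel, Nat.factorial_succ, pow_succ]
  push_cast
  field_simp
  ring

theorem mul_sum_antidiagonal_abelTerm_mul_div (p q : ℕ) :
    (p + q + 2) * ∑ i ∈ antidiagonal p, abelTerm 1 1 i.1 * (i.2 * selfPow i.2 / (i.2 + (q + 1))) =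
      (p + 1) * selfPow (p + 1) - (q + 1) * ∑ i ∈ antidiagonal p,
        (i.1 + 1 : ℚ) ^ i.1 / i.1 ! * (selfPow i.2 / (i.2 + (q + 1))) := by
  rw [selfPow_succ, mul_sum, mul_sum, mul_sum, ← sum_sub_distrib]
  refine sum_congr rfl fun i hi => ?_
  have hpow := abelTerm_mul_pow (1 : ℚ) 1 (k := i.1) rfl
  rw [one_mul, mul_one, pow_one, add_comm 1] at hpow
  rw [← hpow, ← HasAntidiagonal.mem_antidiagonal.1 hi]
  push_cast
  field_simp
  ring

theorem sum_abelTerm_mul_selfPow_add_sum (p q : ℕ) :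
    selfPow (q + 1) *
        ∑ i ∈ antidiagonal p, abelTerm 1 1 i.1 * (i.2 * selfPow i.2 / (i.2 + (q + 1))) +
      selfPow (p + 1) *
        ∑ i ∈ antidiagonal q, abelTerm 1 1 i.1 * (i.2 * selfPow i.2 / (i.2 + (p + 1))) +
      abelTerm 1 1 (p + q + 1) = selfPow (p + 1) * selfPow (q + 1) := by
  have hsplit := add_pow_div_factorial_eq_sum_add_sum (p + 1 : ℚ) (q + 1) p q
  have habel := abelTerm_mul_pow (1 : ℚ) 1 (k := p + q + 1) rfl
  have hp := mul_sum_antidiagonal_abelTerm_mul_div p q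
  have hq := mul_sum_antidiagonal_abelTerm_mul_div q p
  rw [← mul_sum_antidiagonal_succ_pow_mul_selfPow_div,
    ← mul_sum_antidiagonal_succ_pow_mul_selfPow_div,
    show (p + 1 + (q + 1) : ℚ) = p + q + 2 by ring] at hsplit
  push_cast at habel
  rw [show (1 + (p + q + 1) * 1 : ℚ) = p + q + 2 by ring, one_mul, pow_one] at habel
  rw [add_comm (q : ℚ) p] at hq
  apply mul_left_cancel₀ (show (p + q + 2 : ℚ) ≠ 0 by positivity)
  linear_combination selfPow (q + 1) * hp + selfPow (p + 1) * hq + habel + hsplit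

end SelfPow

/-! ### Cycle lengths under multiplication by a transposition -/

section CycleLengths

variable {α : Type*}

theorem minimalPeriod_eq {f : α → α} {u : α} {n : ℕ} (hn : 0 < n) (h : f^[n] u = u)
    (hlt : ∀ k, 0 < k → k < n → f^[k] u ≠ u) : minimalPeriod f u = n := by
  refine le_antisymm (IsPeriodicPt.minimalPeriod_le hn h) (not_lt.1 fun hlt' => ?_)
  exact hlt _ (IsPeriodicPt.minimalPeriod_pos hn h) hlt' iterate_minimalPeriod

theorem iterate_ne_self {f : α → α} {u : α} {k : ℕ} (hk : 0 < k) (hlt : k < minimalPeriod f u) :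
    f^[k] u ≠ u :=
  not_isPeriodicPt_of_pos_of_lt_minimalPeriod hk.ne' hlt

theorem sameCycle_iterate (x : Perm α) (u : α) (k : ℕ) : x.SameCycle u (x^[k] u) :=
  ⟨k, by rw [zpow_natCast, ← iterate_eq_pow]⟩

section

variable [Finite α]

theorem mem_periodicPts_perm (x : Perm α) (u : α) : u ∈ periodicPts x :=
  mk_mem_periodicPts (orderOf_pos x) <| by
    rw [IsPeriodicPt, IsFixedPt, iterate_eq_pow, pow_orderOf_eq_one, one_apply]

theorem minimalPeriod_pos (x : Perm α) (u : α) : 0 < minimalPeriod x u :=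
  minimalPeriod_pos_of_mem_periodicPts (mem_periodicPts_perm x u)

theorem sameCycle_iff_exists_iterate {x : Perm α} {u v : α} :
    x.SameCycle u v ↔ ∃ k < minimalPeriod x u, x^[k] u = v := by
  refine ⟨fun h => ?_, fun ⟨k, _, hk⟩ => hk ▸ sameCycle_iterate x u k⟩
  obtain ⟨k, hk⟩ := h.exists_nat_pow_eq
  exact ⟨k % minimalPeriod x u, Nat.mod_lt _ (minimalPeriod_pos x u), by
    rw [iterate_mod_minimalPeriod_eq, iterate_eq_pow, hk]⟩

end

variable [Fintype α] [DecidableEq α]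

theorem sum_sameCycle {M : Type*} [AddCommMonoid M] (x : Perm α) (u : α) (g : α → M) :
    ∑ v with x.SameCycle u v, g v = ∑ k ∈ range (minimalPeriod x u), g (x^[k] u) := by
  refine (sum_bij (fun k _ => x^[k] u) ?_ ?_ ?_ fun _ _ => rfl).symm
  · exact fun k _ => by simpa using sameCycle_iterate x u k
  · exact fun i hi j hj h => iterate_injOn_Iio_minimalPeriod (mem_range.1 hi) (mem_range.1 hj) h
  · intro v hv
    obtain ⟨k, hk, rfl⟩ := sameCycle_iff_exists_iterate.1 (mem_filter.1 hv).2
    exact ⟨k, mem_range.2 hk, rfl⟩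

theorem card_support_cycleOf {x : Perm α} {u : α} (hu : u ∈ x.support) :
    #(x.cycleOf u).support = minimalPeriod x u := by
  have hsupp : (x.cycleOf u).support = univ.filter (x.SameCycle u) := by
    ext v
    rw [mem_support_cycleOf_iff' (mem_support.1 hu), mem_filter, and_iff_right (mem_univ v)]
  rw [hsupp, card_eq_sum_ones, sum_sameCycle, ← card_eq_sum_ones, card_range]

theorem sum_minimalPeriod {M : Type*} [AddCommMonoid M] (x : Perm α) (g : ℕ → M) :
    ∑ u, g (minimalPeriod x u) = (x.partition.parts.map fun l => l • g l).sum := by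
  rw [parts_partition, Multiset.map_add, Multiset.sum_add, Multiset.map_replicate,
    Multiset.sum_replicate, cycleType_def, Multiset.map_map, ← sum_add_sum_compl x.support]
  congr 1
  · rw [← sum_fiberwise_of_maps_to (t := x.cycleFactorsFinset) (g := x.cycleOf)
      fun u hu => cycleOf_mem_cycleFactorsFinset_iff.2 hu]
    refine sum_congr rfl fun c hc => ?_
    have hfiber : {u ∈ x.support | x.cycleOf u = c} = c.support := by
      ext u
      rw [mem_filter]
      refine ⟨fun ⟨hu, hc⟩ => hc ▸ mem_support_cycleOf_iff.2 ⟨.rfl, hu⟩, fun hu => ?_⟩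
      exact ⟨mem_cycleFactorsFinset_support_le hc hu, (cycle_is_cycleOf hu hc).symm⟩
    rw [hfiber, sum_congr rfl (g := fun _ => g #c.support), sum_const, comp_apply, comp_apply]
    intro u hu
    rw [← card_support_cycleOf (mem_cycleFactorsFinset_support_le hc hu), ← cycle_is_cycleOf hu hc]
  · rw [sum_congr rfl (g := fun _ => g 1), sum_const, card_compl, one_smul]
    intro u hu
    rw [minimalPeriod_eq_one_iff_isFixedPt.2 (notMem_support.1 (mem_compl.1 hu))]

theorem minimalPeriod_mem_parts (x : Perm α) (u : α) : minimalPeriod x u ∈ x.partition.parts := by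
  by_contra hmem
  have hsum := sum_minimalPeriod x fun l => if l = minimalPeriod x u then 1 else 0
  rw [Multiset.sum_eq_zero, sum_eq_zero_iff] at hsum
  · simpa using hsum u (mem_univ u)
  · intro _ hn
    obtain ⟨l, hl, rfl⟩ := Multiset.mem_map.1 hn
    rw [if_neg (by rintro rfl; exact hmem hl), smul_zero]

theorem sum_not_sameCycle_minimalPeriod {M : Type*} [AddCancelCommMonoid M] (x : Perm α) (u : α)
    (g : ℕ → M) :
    ∑ v with ¬x.SameCycle u v, g (minimalPeriod x v) =
      ((x.partition.parts.erase (minimalPeriod x u)).map fun l => l • g l).sum := by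
  have hsum := sum_minimalPeriod x g
  rwa [← Multiset.cons_erase (minimalPeriod_mem_parts x u), Multiset.map_cons, Multiset.sum_cons,
    ← sum_filter_add_sum_filter_not univ (x.SameCycle u), sum_sameCycle,
    sum_congr rfl fun k _ => by rw [minimalPeriod_apply_iterate (mem_periodicPts_perm x u)],
    sum_const, card_range, add_right_inj] at hsum

theorem minimalPeriod_mem_parts_erase {x : Perm α} {u v : α} (h : ¬x.SameCycle u v) :
    minimalPeriod x v ∈ x.partition.parts.erase (minimalPeriod x u) := by
  by_contra hmem
  have hsum := sum_not_sameCycle_minimalPeriod x u fun l => if l = minimalPeriod x v then 1 else 0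
  rw [Multiset.sum_eq_zero, sum_eq_zero_iff] at hsum
  · simpa using hsum v (by simpa using h)
  · intro _ hn
    obtain ⟨l, hl, rfl⟩ := Multiset.mem_map.1 hn
    rw [if_neg (by rintro rfl; exact hmem hl), smul_zero]

theorem parts_eq_of_sum_minimalPeriod {x : Perm α} {N : Multiset ℕ} (hN : ∀ l ∈ N, 0 < l)
    (h : ∀ g : ℕ → ℕ, ∑ u, g (minimalPeriod x u) = (N.map fun l => l * g l).sum) :
    x.partition.parts = N := by
  have hcount (N : Multiset ℕ) (l : ℕ) :
      (N.map fun k => k * if k = l then 1 else 0).sum = N.count l * l := by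
    induction N using Multiset.induction with
    | empty => simp
    | cons a N ih =>
      rw [Multiset.map_cons, Multiset.sum_cons, ih, Multiset.count_cons]
      rcases eq_or_ne a l with rfl | hne
      · simp [add_mul, add_comm]
      · simp [hne, hne.symm]
  ext l
  have hl := (sum_minimalPeriod x fun k => if k = l then 1 else 0).symm.trans
    (h fun k => if k = l then 1 else 0)
  simp only [smul_eq_mul, hcount] at hl
  rcases l.eq_zero_or_pos with rfl | hpos
  · rw [Multiset.count_eq_zero.2 fun h0 => (hN 0 h0).ne rfl,
      Multiset.count_eq_zero.2 fun h0 => (x.partition.parts_pos h0).ne rfl]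
  · exact Nat.eq_of_mul_eq_mul_right hpos hl

end CycleLengths

section SwapMul

variable {α : Type*} [DecidableEq α]

theorem iterate_swap_mul {x : Perm α} {u v w : α} {n : ℕ}
    (h : ∀ k, 0 < k → k ≤ n → x^[k] w ≠ u ∧ x^[k] w ≠ v) : (swap u v * x)^[n] w = x^[n] w := by
  induction n with
  | zero => rfl
  | succ n ih =>
    have hn := h (n + 1) n.succ_pos le_rfl
    rw [iterate_succ_apply'] at hn
    rw [iterate_succ_apply', iterate_succ_apply', ih fun k hk hkn => h k hk (hkn.trans n.le_succ),
      mul_apply, swap_apply_of_ne_of_ne hn.1 hn.2]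

theorem iterate_swap_mul_succ {x : Perm α} {u v w : α} {n : ℕ}
    (h : ∀ k, 0 < k → k ≤ n → x^[k] w ≠ u ∧ x^[k] w ≠ v) :
    (swap u v * x)^[n + 1] w = swap u v (x^[n + 1] w) := by
  rw [iterate_succ_apply', iterate_swap_mul h, iterate_succ_apply', mul_apply]

theorem iterate_swap_mul_of_not_sameCycle {x : Perm α} {u v w : α}
    (hu : ¬x.SameCycle w u) (hv : ¬x.SameCycle w v) (n : ℕ) :
    (swap u v * x)^[n] w = x^[n] w :=
  iterate_swap_mul fun k _ _ =>
    ⟨fun h => hu (h ▸ sameCycle_iterate x w k), fun h => hv (h ▸ sameCycle_iterate x w k)⟩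

theorem minimalPeriod_swap_mul_of_not_sameCycle {x : Perm α} {u v w : α}
    (hu : ¬x.SameCycle w u) (hv : ¬x.SameCycle w v) :
    minimalPeriod (swap u v * x) w = minimalPeriod x w := by
  refine minimalPeriod_eq_minimalPeriod_iff.2 fun n => ?_
  rw [IsPeriodicPt, IsPeriodicPt, IsFixedPt, IsFixedPt, iterate_swap_mul_of_not_sameCycle hu hv]

section Cut

variable {x : Perm α} {u : α} {i : ℕ}

theorem iterate_cut_left (hi : i < minimalPeriod x u) {k : ℕ} (hk : k < i) :
    (swap u (x^[i] u) * x)^[k] u = x^[k] u := by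
  refine iterate_swap_mul fun j hj hjk => ⟨iterate_ne_self hj (by omega), fun h => ?_⟩
  have := (iterate_eq_iterate_iff_of_lt_minimalPeriod (by omega) hi).1 h
  omega

theorem minimalPeriod_cut_left (hi0 : 0 < i) (hi : i < minimalPeriod x u) :
    minimalPeriod (swap u (x^[i] u) * x) u = i := by
  refine minimalPeriod_eq hi0 ?_ fun k hk hki => ?_
  · obtain ⟨j, rfl⟩ := Nat.exists_eq_add_one_of_ne_zero hi0.ne'
    rw [iterate_swap_mul_succ fun k hk hkj => ⟨iterate_ne_self hk (by omega), fun h => ?_⟩,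
      swap_apply_right]
    have := (iterate_eq_iterate_iff_of_lt_minimalPeriod (by omega) hi).1 h
    omega
  · rw [iterate_cut_left hi hki]
    exact iterate_ne_self hk (hki.trans hi)

theorem swap_iterate_comm (hi : i < minimalPeriod x u) :
    swap u (x^[i] u) = swap (x^[i] u) (x^[minimalPeriod x u - i] (x^[i] u)) := by
  rw [← iterate_add_apply, Nat.sub_add_cancel hi.le, iterate_minimalPeriod, swap_comm]

section

variable [Finite α]

theorem iterate_cut_right (hi0 : 0 < i) (hi : i < minimalPeriod x u) {k : ℕ}
    (hk : k < minimalPeriod x u - i) :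
    (swap u (x^[i] u) * x)^[k] (x^[i] u) = x^[k] (x^[i] u) := by
  rw [swap_iterate_comm hi]
  refine iterate_cut_left ?_ hk
  rw [minimalPeriod_apply_iterate (mem_periodicPts_perm x u)]
  omega

theorem minimalPeriod_cut_right (hi0 : 0 < i) (hi : i < minimalPeriod x u) :
    minimalPeriod (swap u (x^[i] u) * x) (x^[i] u) = minimalPeriod x u - i := by
  rw [swap_iterate_comm hi]
  refine minimalPeriod_cut_left (Nat.sub_pos_of_lt hi) ?_
  rw [minimalPeriod_apply_iterate (mem_periodicPts_perm x u)]
  omega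

theorem not_sameCycle_cut (hi0 : 0 < i) (hi : i < minimalPeriod x u) {w : α}
    (h : ∀ k, i ≤ k → k < minimalPeriod x u → x^[k] u ≠ w) :
    ¬(swap u (x^[i] u) * x).SameCycle (x^[i] u) w := by
  rw [sameCycle_iff_exists_iterate, minimalPeriod_cut_right hi0 hi]
  rintro ⟨k, hk, hkw⟩
  rw [iterate_cut_right hi0 hi hk, ← iterate_add_apply] at hkw
  exact h (k + i) (by omega) (by omega) hkw

end

variable [Fintype α]

theorem sum_sameCycle_minimalPeriod_cut (hi0 : 0 < i) (hi : i < minimalPeriod x u) (g : ℕ → ℕ) :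
    ∑ w with x.SameCycle u w, g (minimalPeriod (swap u (x^[i] u) * x) w) =
      i * g i + (minimalPeriod x u - i) * g (minimalPeriod x u - i) := by
  set y := swap u (x^[i] u) * x
  have hleft : ∀ k ∈ range i, g (minimalPeriod y (x^[k] u)) = g i := fun k hk => by
    rw [← iterate_cut_left hi (mem_range.1 hk),
      minimalPeriod_apply_iterate (mem_periodicPts_perm _ u), minimalPeriod_cut_left hi0 hi]
  have hright : ∀ k ∈ range (minimalPeriod x u - i),
      g (minimalPeriod y (x^[i + k] u)) = g (minimalPeriod x u - i) := fun k hk => by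
    rw [add_comm, iterate_add_apply, ← iterate_cut_right hi0 hi (mem_range.1 hk),
      minimalPeriod_apply_iterate (mem_periodicPts_perm _ _), minimalPeriod_cut_right hi0 hi]
  rw [sum_sameCycle, ← Nat.add_sub_of_le hi.le, sum_range_add, sum_congr rfl hleft,
    Nat.add_sub_of_le hi.le, sum_congr rfl hright]
  simp only [sum_const, card_range, smul_eq_mul]

theorem parts_cut (hi0 : 0 < i) (hi : i < minimalPeriod x u) :
    (swap u (x^[i] u) * x).partition.parts =
      i ::ₘ (minimalPeriod x u - i) ::ₘ x.partition.parts.erase (minimalPeriod x u) := by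
  refine parts_eq_of_sum_minimalPeriod (fun l hl => ?_) fun g => ?_
  · rcases Multiset.mem_cons.1 hl with rfl | hl
    · exact hi0
    rcases Multiset.mem_cons.1 hl with rfl | hl
    · exact Nat.sub_pos_of_lt hi
    · exact x.partition.parts_pos (Multiset.mem_of_mem_erase hl)
  have hother : ∀ w ∈ univ.filter fun w => ¬x.SameCycle u w,
      g (minimalPeriod (swap u (x^[i] u) * x) w) = g (minimalPeriod x w) := fun w hw => by
    have hw := (mem_filter.1 hw).2
    rw [minimalPeriod_swap_mul_of_not_sameCycle (fun h => hw h.symm)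
      fun h => hw ((sameCycle_iterate x u i).trans h.symm)]
  rw [← sum_filter_add_sum_filter_not univ (x.SameCycle u),
    sum_sameCycle_minimalPeriod_cut hi0 hi, sum_congr rfl hother,
    sum_not_sameCycle_minimalPeriod]
  simp only [Multiset.map_cons, Multiset.sum_cons, smul_eq_mul, add_assoc]

end Cut

section Merge

variable {x : Perm α} {u v : α}

theorem iterate_merge (h : ¬x.SameCycle u v) {k : ℕ} (hk : k < minimalPeriod x u) :
    (swap u v * x)^[k] u = x^[k] u :=
  iterate_swap_mul fun j hj hjk =>
    ⟨iterate_ne_self hj (by omega), fun e => h (e ▸ sameCycle_iterate x u j)⟩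

section

variable [Finite α]

theorem iterate_merge_minimalPeriod (h : ¬x.SameCycle u v) :
    (swap u v * x)^[minimalPeriod x u] u = v := by
  obtain ⟨j, hj⟩ := Nat.exists_eq_add_one_of_ne_zero (minimalPeriod_pos x u).ne'
  rw [hj, iterate_swap_mul_succ, ← hj, iterate_minimalPeriod, swap_apply_left]
  exact fun k hk hkj =>
    ⟨iterate_ne_self hk (by omega), fun e => h (e ▸ sameCycle_iterate x u k)⟩

theorem minimalPeriod_merge (h : ¬x.SameCycle u v) :
    minimalPeriod (swap u v * x) u = minimalPeriod x u + minimalPeriod x v := by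
  have hvu : ¬x.SameCycle v u := fun e => h e.symm
  have hreturn := iterate_merge_minimalPeriod hvu
  rw [swap_comm] at hreturn
  refine minimalPeriod_eq (Nat.add_pos_left (minimalPeriod_pos x u) _) ?_ fun k hk hlt => ?_
  · rw [add_comm, iterate_add_apply, iterate_merge_minimalPeriod h, hreturn]
  rcases lt_or_ge k (minimalPeriod x u) with hku | hku
  · rw [iterate_merge h hku]
    exact iterate_ne_self hk hku
  · obtain ⟨j, rfl⟩ := Nat.exists_eq_add_of_le' hku
    rw [iterate_add_apply, iterate_merge_minimalPeriod h, swap_comm,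
      iterate_merge hvu (by omega)]
    exact fun e => hvu (e ▸ sameCycle_iterate x v j)

end

variable [Fintype α]

theorem parts_merge (h : ¬x.SameCycle u v) :
    (swap u v * x).partition.parts = (minimalPeriod x u + minimalPeriod x v) ::ₘ
      (x.partition.parts.erase (minimalPeriod x u)).erase (minimalPeriod x v) := by
  have hlt : minimalPeriod x u < minimalPeriod (swap u v * x) u := by
    have := minimalPeriod_pos x v
    rw [minimalPeriod_merge h]
    omega
  have hcut := parts_cut (minimalPeriod_pos x u) hlt
  rw [iterate_merge_minimalPeriod h, ← mul_assoc, swap_mul_self, one_mul, minimalPeriod_merge h,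
    Nat.add_sub_cancel_left] at hcut
  rw [hcut, Multiset.erase_cons_head, Multiset.erase_cons_head, ← minimalPeriod_merge h,
    Multiset.cons_erase (minimalPeriod_mem_parts _ u)]

end Merge

end SwapMul

/-! ### Cycle types under multiplication by a 3-cycle -/

section ThreeCycleMoves

theorem swap_mul_swap_rotate {α : Type*} [DecidableEq α] {u v w : α} (huv : u ≠ v) (hvw : v ≠ w)
    (huw : u ≠ w) : swap v w * swap u v = swap w u * swap v w := by
  ext z
  simp only [mul_apply, swap_apply_def]
  grind

variable {α : Type*} [Fintype α] [DecidableEq α] {x : Perm α} {u v w : α} {i j : ℕ}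

theorem parts_split (hi : 0 < i) (hij : i < j) (hj : j < minimalPeriod x u) :
    (swap (x^[i] u) (x^[j] u) * (swap u (x^[i] u) * x)).partition.parts =
      i ::ₘ (j - i) ::ₘ (minimalPeriod x u - j) ::ₘ
        x.partition.parts.erase (minimalPeriod x u) := by
  have hiu : i < minimalPeriod x u := hij.trans hj
  set y := swap u (x^[i] u) * x with hy
  have hper : minimalPeriod y (x^[i] u) = minimalPeriod x u - i := minimalPeriod_cut_right hi hiu
  have hpoint : y^[j - i] (x^[i] u) = x^[j] u := by
    rw [iterate_cut_right hi hiu (by omega), ← iterate_add_apply, Nat.sub_add_cancel hij.le]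
  have hcut := parts_cut (x := y) (u := x^[i] u) (i := j - i) (by omega) (by omega)
  rw [hpoint, hper, hy, parts_cut hi hiu, Multiset.cons_swap i, Multiset.erase_cons_head,
    show minimalPeriod x u - i - (j - i) = minimalPeriod x u - j by omega] at hcut
  rw [hcut, Multiset.cons_swap _ i, Multiset.cons_swap _ i]

theorem parts_cut_merge (hi0 : 0 < i) (hi : i < minimalPeriod x u)
    (hw : ¬(swap u (x^[i] u) * x).SameCycle (x^[i] u) w) :
    (swap (x^[i] u) w * (swap u (x^[i] u) * x)).partition.parts =
      (minimalPeriod x u - i + minimalPeriod (swap u (x^[i] u) * x) w) ::ₘ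
        (i ::ₘ x.partition.parts.erase (minimalPeriod x u)).erase
          (minimalPeriod (swap u (x^[i] u) * x) w) := by
  rw [parts_merge hw, minimalPeriod_cut_right hi0 hi, parts_cut hi0 hi, Multiset.cons_swap,
    Multiset.erase_cons_head]

theorem parts_reverse_split (hj : 0 < j) (hji : j < i) (hi : i < minimalPeriod x u) :
    (swap (x^[i] u) (x^[j] u) * (swap u (x^[i] u) * x)).partition.parts = x.partition.parts := by
  have hi0 : 0 < i := hj.trans hji
  have hper : minimalPeriod (swap u (x^[i] u) * x) (x^[j] u) = i := by
    rw [← iterate_cut_left hi hji, minimalPeriod_apply_iterate (mem_periodicPts_perm _ u),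
      minimalPeriod_cut_left hi0 hi]
  have hnot := not_sameCycle_cut (w := x^[j] u) hi0 hi fun k hik hk h => by
    have := (iterate_eq_iterate_iff_of_lt_minimalPeriod hk (hji.trans hi)).1 h
    omega
  rw [parts_cut_merge hi0 hi hnot, hper, Nat.sub_add_cancel hi.le, Multiset.erase_cons_head,
    Multiset.cons_erase (minimalPeriod_mem_parts x u)]

theorem parts_transfer (hi0 : 0 < i) (hi : i < minimalPeriod x u) (hw : ¬x.SameCycle u w) :
    (swap (x^[i] u) w * (swap u (x^[i] u) * x)).partition.parts =
      i ::ₘ (minimalPeriod x u - i + minimalPeriod x w) ::ₘ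
        (x.partition.parts.erase (minimalPeriod x u)).erase (minimalPeriod x w) := by
  have hnot := not_sameCycle_cut (w := w) hi0 hi fun k _ _ h => hw (h ▸ sameCycle_iterate x u k)
  have hper : minimalPeriod (swap u (x^[i] u) * x) w = minimalPeriod x w :=
    minimalPeriod_swap_mul_of_not_sameCycle (fun h => hw h.symm)
      fun h => hw ((sameCycle_iterate x u i).trans h.symm)
  rw [parts_cut_merge hi0 hi hnot, hper,
    Multiset.erase_cons_tail_of_mem (minimalPeriod_mem_parts_erase hw), Multiset.cons_swap]

theorem parts_merge_merge (huv : ¬x.SameCycle u v) (hvw : ¬x.SameCycle v w)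
    (huw : ¬x.SameCycle u w) :
    ∃ R, x.partition.parts = minimalPeriod x u ::ₘ minimalPeriod x v ::ₘ minimalPeriod x w ::ₘ R ∧
      (swap v w * (swap u v * x)).partition.parts =
        (minimalPeriod x u + minimalPeriod x v + minimalPeriod x w) ::ₘ R := by
  have hwu : ¬x.SameCycle w u := fun h => huw h.symm
  have hwv : ¬x.SameCycle w v := fun h => hvw h.symm
  have hnot : ¬(swap u v * x).SameCycle v w := fun h => by
    obtain ⟨k, -, hk⟩ := sameCycle_iff_exists_iterate.1 h.symm
    rw [iterate_swap_mul_of_not_sameCycle hwu hwv] at hk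
    exact hwv (hk ▸ sameCycle_iterate x w k)
  have hv : minimalPeriod (swap u v * x) v = minimalPeriod x u + minimalPeriod x v := by
    rw [swap_comm, minimalPeriod_merge fun h => huv h.symm, add_comm]
  have hw : minimalPeriod (swap u v * x) w = minimalPeriod x w :=
    minimalPeriod_swap_mul_of_not_sameCycle hwu hwv
  have hmem := minimalPeriod_mem_parts_erase hnot
  rw [hv, hw, parts_merge huv, Multiset.erase_cons_head] at hmem
  refine ⟨((x.partition.parts.erase (minimalPeriod x u)).erase (minimalPeriod x v)).erase
    (minimalPeriod x w), ?_, ?_⟩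
  · rw [Multiset.cons_erase hmem, Multiset.cons_erase (minimalPeriod_mem_parts_erase huv),
      Multiset.cons_erase (minimalPeriod_mem_parts x u)]
  · rw [parts_merge hnot, hv, hw, parts_merge huv, Multiset.erase_cons_head]

/-- `ThreeCycleMove M N` holds when the multiset of cycle lengths `M` can turn into `N` on
multiplying a permutation by a 3-cycle: a cycle is split into three, nothing changes, a piece of
one cycle is handed over to another cycle, or three cycles are merged. -/
inductive ThreeCycleMove : Multiset ℕ → Multiset ℕ → Prop
  | split (a b c : ℕ) (R : Multiset ℕ) :
      ThreeCycleMove ((a + b + c) ::ₘ R) (a ::ₘ b ::ₘ c ::ₘ R)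
  | rearrange (M : Multiset ℕ) : ThreeCycleMove M M
  | transfer (a b c : ℕ) (R : Multiset ℕ) :
      ThreeCycleMove ((a + b) ::ₘ c ::ₘ R) (a ::ₘ (b + c) ::ₘ R)
  | merge (a b c : ℕ) (R : Multiset ℕ) :
      ThreeCycleMove (a ::ₘ b ::ₘ c ::ₘ R) ((a + b + c) ::ₘ R)

theorem threeCycleMove_of_sameCycle (huv : u ≠ v) (hvw : v ≠ w) (huw : u ≠ w)
    (h : x.SameCycle u v) :
    ThreeCycleMove x.partition.parts (swap v w * (swap u v * x)).partition.parts := by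
  obtain ⟨i, hi, rfl⟩ := sameCycle_iff_exists_iterate.1 h
  have hi0 : 0 < i := Nat.pos_of_ne_zero fun h0 => huv (by rw [h0, iterate_zero_apply])
  by_cases hw : x.SameCycle u w
  · obtain ⟨j, hj, rfl⟩ := sameCycle_iff_exists_iterate.1 hw
    rcases lt_trichotomy i j with hij | rfl | hji
    · have hmove := ThreeCycleMove.split i (j - i) (minimalPeriod x u - j)
        (x.partition.parts.erase (minimalPeriod x u))
      rwa [← parts_split hi0 hij hj, Nat.add_sub_of_le hij.le, Nat.add_sub_of_le hj.le,
        Multiset.cons_erase (minimalPeriod_mem_parts x u)] at hmove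
    · exact absurd rfl hvw
    · have hj0 : 0 < j := Nat.pos_of_ne_zero fun h0 => huw (by rw [h0, iterate_zero_apply])
      rw [parts_reverse_split hj0 hji hi]
      exact .rearrange _
  · have hmove := ThreeCycleMove.transfer i (minimalPeriod x u - i) (minimalPeriod x w)
      ((x.partition.parts.erase (minimalPeriod x u)).erase (minimalPeriod x w))
    rwa [← parts_transfer hi0 hi hw, Nat.add_sub_of_le hi.le,
      Multiset.cons_erase (minimalPeriod_mem_parts_erase hw),
      Multiset.cons_erase (minimalPeriod_mem_parts x u)] at hmove

theorem threeCycleMove_parts (huv : u ≠ v) (hvw : v ≠ w) (huw : u ≠ w) :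
    ThreeCycleMove x.partition.parts (swap v w * (swap u v * x)).partition.parts := by
  by_cases h₁ : x.SameCycle u v
  · exact threeCycleMove_of_sameCycle huv hvw huw h₁
  by_cases h₂ : x.SameCycle v w
  · rw [← mul_assoc, swap_mul_swap_rotate huv hvw huw, mul_assoc]
    exact threeCycleMove_of_sameCycle hvw huw.symm huv.symm h₂
  by_cases h₃ : x.SameCycle u w
  · rw [← mul_assoc, ← swap_mul_swap_rotate huw.symm huv hvw.symm, mul_assoc]
    exact threeCycleMove_of_sameCycle huw.symm huv hvw.symm h₃.symm
  obtain ⟨R, hx, hmerge⟩ := parts_merge_merge h₁ h₂ h₃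
  rw [hmerge, hx]
  exact .merge _ _ _ _

end ThreeCycleMoves

section Parity

theorem countP_odd_cons (a : ℕ) (M : Multiset ℕ) :
    (a ::ₘ M).countP Odd = M.countP Odd + a % 2 := by
  rw [Multiset.countP_cons]
  rcases Nat.even_or_odd a with h | h
  · rw [if_neg (Nat.not_odd_iff_even.2 h), Nat.even_iff.1 h]
  · rw [if_pos h, Nat.odd_iff.1 h]

theorem countP_even_cons (a : ℕ) (M : Multiset ℕ) :
    (a ::ₘ M).countP Even = M.countP Even + (1 - a % 2) := by
  rw [Multiset.countP_cons]
  rcases Nat.even_or_odd a with h | h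
  · rw [if_pos h, Nat.even_iff.1 h]
  · rw [if_neg (Nat.not_even_iff_odd.2 h), Nat.odd_iff.1 h]

theorem ThreeCycleMove.countP_odd_le {M N : Multiset ℕ} (h : ThreeCycleMove M N) :
    N.countP Odd ≤ M.countP Odd + 2 := by
  cases h with
  | rearrange => omega
  | _ => simp only [countP_odd_cons]; omega

theorem ThreeCycleMove.countP_even {M N : Multiset ℕ} (h : ThreeCycleMove M N)
    (hodd : N.countP Odd = M.countP Odd + 2) :
    N.countP Even = M.countP Even ∨ N.countP Even + 2 = M.countP Even := by
  cases h <;> simp only [countP_odd_cons, countP_even_cons] at hodd ⊢ <;> omega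

end Parity

section TripleSum

theorem sum_rotate {α M : Type*} [Fintype α] [AddCommMonoid M] (G : α → α → α → M) :
    ∑ u, ∑ v, ∑ w, G v w u = ∑ u, ∑ v, ∑ w, G u v w := by
  rw [sum_comm]
  exact sum_congr rfl fun v _ => sum_comm

theorem sum_eq_of_rotate {α M : Type*} [Fintype α] [AddCommMonoid M] {r : α → α → Prop}
    [DecidableRel r] (hr : Equivalence r) {H : α → α → α → M} (hrot : ∀ u v w, H v w u = H u v w)
    (hH : ∀ u v w, ¬r u v → ¬r v w → ¬r u w → H u v w = 0) :
    ∑ u, ∑ v, ∑ w, H u v w = ∑ u, (∑ v with r u v, ∑ w with r u w, H u v w +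
      3 • ∑ w with ¬r u w, ∑ v with r u v, H u v w) := by
  set G : α → α → α → M := fun u v w => if ¬r u w then if r u v then H u v w else 0 else 0 with hG
  have hsplit (u v w) : H u v w = (if r u v then if r u w then H u v w else 0 else 0) +
      (G u v w + G v w u + G w u v) := by
    simp only [hG, hrot w u v, hrot u v w]
    have h₁ : r u v → r v w → r u w := hr.trans
    have h₂ : r u v → r u w → r v w := fun h => hr.trans (hr.symm h)
    have h₃ : r u w → r v w → r u v := fun h h' => hr.trans h (hr.symm h')
    have := hH u v w
    have hcomm {a b} : r a b ↔ r b a := ⟨hr.symm, hr.symm⟩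
    simp only [hcomm (a := v) (b := u), hcomm (a := w)]
    grind
  have hsum : ∑ u, ∑ v, ∑ w, (G u v w + G v w u + G w u v) = 3 • ∑ u, ∑ v, ∑ w, G u v w := by
    simp only [sum_add_distrib, sum_rotate G, ← sum_rotate fun u v w => G w u v]
    abel
  rw [sum_congr rfl fun u _ => sum_congr rfl fun v _ => sum_congr rfl fun w _ => hsplit u v w]
  simp only [sum_add_distrib, ← smul_sum] at hsum ⊢
  rw [hsum]
  congr 1
  · simp only [sum_filter, sum_ite_irrel, sum_const_zero]
  · refine congrArg (3 • ·) (sum_congr rfl fun u _ => ?_)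
    rw [sum_comm]
    simp only [hG, sum_filter, sum_ite_irrel, sum_const_zero]

/-- The sum of `f` over the multisets obtained by splitting a part `l`, the other parts being `R`,
into an ordered triple of parts. -/
def splitSum (f : Multiset ℕ → ℚ) (l : ℕ) (R : Multiset ℕ) : ℚ :=
  ∑ i ∈ antidiagonal l, ∑ j ∈ antidiagonal i.2, f (i.1 ::ₘ j.1 ::ₘ j.2 ::ₘ R)

/-- The sum of `f` over the multisets obtained by handing a piece of a part `l` over to a part `l'`,
the other parts being `R`. -/
def transferSum (f : Multiset ℕ → ℚ) (l l' : ℕ) (R : Multiset ℕ) : ℚ :=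
  ∑ i ∈ antidiagonal l, f (i.1 ::ₘ (i.2 + l') ::ₘ R)

/-- The contribution to `moveSum` of the moves that cut a part `l`, the other parts being `R`. -/
def cutSum (f : Multiset ℕ → ℚ) (l : ℕ) (R : Multiset ℕ) : ℚ :=
  l * (splitSum f l R + 3 * (R.map fun l' => l' * transferSum f l l' (R.erase l')).sum)

/-- The sum of `f` over the cycle types reached from cycle type `M` by a 3-cycle that splits a cycle
or transfers a piece of one cycle to another one; every 3-cycle counts three times. -/
def moveSum (f : Multiset ℕ → ℚ) (M : Multiset ℕ) : ℚ := (M.map fun l => cutSum f l (M.erase l)).sum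

variable {α : Type*} [Fintype α] [DecidableEq α] {x : Perm α} {f : Multiset ℕ → ℚ}

/-- The value of `f` on the cycle type of `(u v w)⁻¹ * x`, extended by `0` to triples with a
repetition. -/
def tripleValue (f : Multiset ℕ → ℚ) (x : Perm α) (u v w : α) : ℚ :=
  if u ≠ v ∧ v ≠ w ∧ u ≠ w then f (swap v w * (swap u v * x)).partition.parts else 0

theorem tripleValue_rotate (f : Multiset ℕ → ℚ) (x : Perm α) (u v w : α) :
    tripleValue f x v w u = tripleValue f x u v w := by
  unfold tripleValue
  by_cases h : u ≠ v ∧ v ≠ w ∧ u ≠ w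
  · rw [if_pos h, if_pos ⟨h.2.1, h.2.2.symm, h.1.symm⟩, ← mul_assoc, ← mul_assoc,
      swap_mul_swap_rotate h.1 h.2.1 h.2.2]
  · rw [if_neg h, if_neg fun h' => h ⟨h'.2.2.symm, h'.1, h'.2.1.symm⟩]

theorem tripleValue_eq_zero (hf : ∀ a b c R, x.partition.parts = a ::ₘ b ::ₘ c ::ₘ R →
    f ((a + b + c) ::ₘ R) = 0) {u v w : α} (huv : ¬x.SameCycle u v) (hvw : ¬x.SameCycle v w)
    (huw : ¬x.SameCycle u w) : tripleValue f x u v w = 0 := by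
  obtain ⟨R, hx, hmerge⟩ := parts_merge_merge huv hvw huw
  rw [tripleValue, hmerge, hf _ _ _ _ hx, ite_self]

theorem tripleValue_split (hf0 : ∀ R, f (0 ::ₘ R) = 0) {u : α} {i k : ℕ}
    (hk : i + k < minimalPeriod x u) :
    tripleValue f x u (x^[i] u) (x^[i + k] u) = f (i ::ₘ k ::ₘ (minimalPeriod x u - i - k) ::ₘ
      x.partition.parts.erase (minimalPeriod x u)) := by
  rcases i.eq_zero_or_pos with rfl | hi
  · rw [tripleValue, if_neg (by simp), hf0]
  rcases k.eq_zero_or_pos with rfl | hk0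
  · rw [tripleValue, if_neg (by simp), Multiset.cons_swap, hf0]
  have hne := (iterate_eq_iterate_iff_of_lt_minimalPeriod (by omega : i < _) hk).not.2 (by omega)
  rw [tripleValue, if_pos ⟨(iterate_ne_self hi (by omega)).symm, hne,
    (iterate_ne_self (by omega) hk).symm⟩, parts_split hi (by omega) hk, Nat.add_sub_cancel_left,
    Nat.sub_sub]

theorem tripleValue_reverse_split (hfx : f x.partition.parts = 0) {u : α} {i j : ℕ}
    (hji : j < i) (hi : i < minimalPeriod x u) :
    tripleValue f x u (x^[i] u) (x^[j] u) = 0 := by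
  rcases j.eq_zero_or_pos with rfl | hj
  · rw [tripleValue, if_neg (by simp)]
  · rw [tripleValue, parts_reverse_split hj hji hi, hfx, ite_self]

theorem sum_tripleValue_sameCycle (hfx : f x.partition.parts = 0) (hf0 : ∀ R, f (0 ::ₘ R) = 0)
    (u : α) : ∑ v with x.SameCycle u v, ∑ w with x.SameCycle u w, tripleValue f x u v w =
      splitSum f (minimalPeriod x u) (x.partition.parts.erase (minimalPeriod x u)) := by
  have hf0' (a b) (R) : f (a ::ₘ b ::ₘ 0 ::ₘ R) = 0 := by
    rw [Multiset.cons_swap b, Multiset.cons_swap a, hf0]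
  have hinner : ∀ i ∈ range (minimalPeriod x u), ∑ w with x.SameCycle u w,
      tripleValue f x u (x^[i] u) w = ∑ k ∈ range (minimalPeriod x u - i),
        f (i ::ₘ k ::ₘ (minimalPeriod x u - i - k) ::ₘ
          x.partition.parts.erase (minimalPeriod x u)) := fun i hi => by
    have hi := mem_range.1 hi
    rw [sum_sameCycle]
    nth_rw 1 [← Nat.add_sub_of_le hi.le]
    rw [sum_range_add, sum_eq_zero fun j hj => tripleValue_reverse_split hfx (mem_range.1 hj) hi,
      zero_add]
    exact sum_congr rfl fun k hk => tripleValue_split hf0 (by have := mem_range.1 hk; omega)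
  rw [sum_sameCycle, sum_congr rfl hinner, splitSum]
  simp only [Nat.sum_antidiagonal_eq_sum_range_succ_mk, sum_range_succ, Nat.sub_self, hf0',
    add_zero, sum_range_zero]

theorem sum_tripleValue_not_sameCycle (hfx : f x.partition.parts = 0)
    (hf0 : ∀ R, f (0 ::ₘ R) = 0) {u w : α} (hw : ¬x.SameCycle u w) :
    ∑ v with x.SameCycle u v, tripleValue f x u v w =
      transferSum f (minimalPeriod x u) (minimalPeriod x w)
        ((x.partition.parts.erase (minimalPeriod x u)).erase (minimalPeriod x w)) := by
  rw [sum_sameCycle, transferSum, Nat.sum_antidiagonal_eq_sum_range_succ_mk, sum_range_succ,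
    Nat.sub_self, zero_add, Multiset.cons_erase (minimalPeriod_mem_parts_erase hw),
    Multiset.cons_erase (minimalPeriod_mem_parts x u), hfx, add_zero]
  refine sum_congr rfl fun i hi => ?_
  have hi := mem_range.1 hi
  rcases i.eq_zero_or_pos with rfl | hi0
  · rw [tripleValue, if_neg (by simp), hf0]
  · have hvw : x^[i] u ≠ w := fun h => hw (h ▸ sameCycle_iterate x u i)
    have huw : u ≠ w := fun h => hw (h ▸ .rfl)
    rw [tripleValue, parts_transfer hi0 hi hw, if_pos ⟨(iterate_ne_self hi0 hi).symm, hvw, huw⟩]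

theorem sum_tripleValue (hfx : f x.partition.parts = 0) (hf0 : ∀ R, f (0 ::ₘ R) = 0)
    (hf : ∀ a b c R, x.partition.parts = a ::ₘ b ::ₘ c ::ₘ R → f ((a + b + c) ::ₘ R) = 0) :
    ∑ u, ∑ v, ∑ w, tripleValue f x u v w = moveSum f x.partition.parts := by
  rw [sum_eq_of_rotate (SameCycle.equivalence x) (tripleValue_rotate f x)
    fun u v w => tripleValue_eq_zero hf, moveSum]
  simp only [cutSum, ← nsmul_eq_mul, ← sum_minimalPeriod, ← sum_not_sameCycle_minimalPeriod]
  refine sum_congr rfl fun u _ => ?_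
  rw [sum_tripleValue_sameCycle hfx hf0,
    sum_congr rfl fun w hw => sum_tripleValue_not_sameCycle hfx hf0 (mem_filter.1 hw).2]
  simp

end TripleSum

section ThreeCycleSum

variable {α : Type*} [Fintype α] [DecidableEq α]

instance : DecidablePred (IsThreeCycle : Perm α → Prop) := fun t =>
  inferInstanceAs (Decidable (t.cycleType = {3}))

theorem isThreeCycle_swap_mul_swap {u v w : α} (huv : u ≠ v) (hvw : v ≠ w) (huw : u ≠ w) :
    (swap u v * swap v w).IsThreeCycle := by
  rw [swap_comm u v]
  exact isThreeCycle_swap_mul_swap_same huv.symm hvw huw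

theorem ne_of_isThreeCycle {t : Perm α} (ht : t.IsThreeCycle) {u : α} (hu : u ∈ t.support) :
    u ≠ t u ∧ t u ≠ t (t u) ∧ u ≠ t (t u) := by
  have hnodup := ht.nodup_iff_mem_support.2 hu
  grind

theorem sum_sum_sum_swap_mul_swap {M : Type*} [AddCommMonoid M] (F : Perm α → M) :
    ∑ u, ∑ v, ∑ w, (if u ≠ v ∧ v ≠ w ∧ u ≠ w then F (swap u v * swap v w) else 0) =
      3 • ∑ t with t.IsThreeCycle, F t := by
  have hsupport : ∀ t ∈ univ.filter (IsThreeCycle : Perm α → Prop),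
      3 • F t = ∑ _u ∈ t.support, F t := fun t ht => by
    rw [sum_const, (mem_filter.1 ht).2.card_support]
  have htriple : ∑ u, ∑ v, ∑ w, (if u ≠ v ∧ v ≠ w ∧ u ≠ w then F (swap u v * swap v w) else 0) =
      ∑ s : α × α × α with s.1 ≠ s.2.1 ∧ s.2.1 ≠ s.2.2 ∧ s.1 ≠ s.2.2,
        F (swap s.1 s.2.1 * swap s.2.1 s.2.2) := by
    simp only [sum_filter, Fintype.sum_prod_type]
  rw [htriple, smul_sum, sum_congr rfl hsupport, sum_sigma']
  refine sum_bij' (fun s _ => ⟨swap s.1 s.2.1 * swap s.2.1 s.2.2, s.1⟩)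
    (fun s _ => (s.2, s.1 s.2, s.1 (s.1 s.2))) ?_ ?_ ?_ ?_ fun _ _ => rfl
  · rintro ⟨u, v, w⟩ hs
    obtain ⟨huv, hvw, huw⟩ : u ≠ v ∧ v ≠ w ∧ u ≠ w := (mem_filter.1 hs).2
    refine mem_sigma.2 ⟨mem_filter.2 ⟨mem_univ _, isThreeCycle_swap_mul_swap huv hvw huw⟩, ?_⟩
    rw [Perm.mem_support, mul_apply, swap_apply_of_ne_of_ne huv huw, swap_apply_left]
    exact huv.symm
  · rintro ⟨t, u⟩ hs
    obtain ⟨ht, hu⟩ := mem_sigma.1 hs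
    exact mem_filter.2 ⟨mem_univ _, ne_of_isThreeCycle (mem_filter.1 ht).2 hu⟩
  · rintro ⟨u, v, w⟩ hs
    obtain ⟨huv, hvw, huw⟩ : u ≠ v ∧ v ≠ w ∧ u ≠ w := (mem_filter.1 hs).2
    simp only [mul_apply, swap_apply_def]
    grind
  · rintro ⟨t, u⟩ hs
    obtain ⟨ht, hu⟩ := mem_sigma.1 hs
    rw [← (mem_filter.1 ht).2.eq_swap_mul_swap_iff_mem_support.2 hu]

theorem three_mul_sum_parts_inv_mul {x : Perm α} {f : Multiset ℕ → ℚ}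
    (hfx : f x.partition.parts = 0) (hf0 : ∀ R, f (0 ::ₘ R) = 0)
    (hf : ∀ a b c R, x.partition.parts = a ::ₘ b ::ₘ c ::ₘ R → f ((a + b + c) ::ₘ R) = 0) :
    3 * ∑ t with t.IsThreeCycle, f (t⁻¹ * x).partition.parts = moveSum f x.partition.parts := by
  have h3 := sum_sum_sum_swap_mul_swap fun t : Perm α => f (t⁻¹ * x).partition.parts
  rw [nsmul_eq_mul, Nat.cast_ofNat] at h3
  rw [← h3, ← sum_tripleValue hfx hf0 hf]
  simp only [tripleValue, mul_inv_rev, swap_inv, mul_assoc]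

theorem threeCycleMove_inv_mul {t : Perm α} (ht : t.IsThreeCycle) (x : Perm α) :
    ThreeCycleMove x.partition.parts (t⁻¹ * x).partition.parts := by
  obtain ⟨u, hu⟩ := ht.isCycle.nonempty_support
  obtain ⟨huv, hvw, huw⟩ := ne_of_isThreeCycle ht hu
  rw [ht.eq_swap_mul_swap_iff_mem_support.2 hu, mul_inv_rev, swap_inv, swap_inv, mul_assoc]
  exact threeCycleMove_parts huv hvw huw

end ThreeCycleSum

/-! ### The weight recursion -/

section Weight

/-- The factor contributed by a cycle of length `n` to `weight`: it is `(2 * k) ^ k / (k - 1)!` for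
`n = 2 * k > 0` and `(2 * k + 1) ^ (k - 1) / k!` for `n = 2 * k + 1`. -/
def partWeight (n : ℕ) : ℚ :=
  if Even n then 2 ^ (n / 2) * ((n / 2 : ℕ) * selfPow (n / 2)) else abelTerm 2 1 (n / 2)

theorem partWeight_two_mul (k : ℕ) : partWeight (2 * k) = 2 ^ k * (k * selfPow k) := by
  simp [partWeight]

theorem partWeight_two_mul_add_one (k : ℕ) : partWeight (2 * k + 1) = abelTerm 2 1 k := by
  rw [partWeight, if_neg (by simp), show (2 * k + 1) / 2 = k by omega]

/-- The restriction of `partWeight` to odd numbers, extended by zero. -/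
def oddWeight (n : ℕ) : ℚ := if Even n then 0 else partWeight n

theorem oddWeight_two_mul_add_one (k : ℕ) : oddWeight (2 * k + 1) = abelTerm 2 1 k := by
  rw [oddWeight, if_neg (by simp), partWeight_two_mul_add_one]

theorem exists_eq_of_oddWeight_ne_zero {n : ℕ} (h : oddWeight n ≠ 0) : ∃ k, n = 2 * k + 1 :=
  Nat.not_even_iff_odd.1 fun hn => h (if_pos hn)

/-- The normalized number of factorizations into `m` 3-cycles of a permutation of cycle type `M`,
namely that number divided by `m!`, when `m` is as small as possible and `M` has zero or two even
parts. -/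
def weight (M : Multiset ℕ) : ℚ :=
  (M.map partWeight).prod * if M.countP Even = 0 then 1 else 4 / ((M.filter Even).sum : ℚ)

theorem weight_zero_cons (R : Multiset ℕ) : weight (0 ::ₘ R) = 0 := by
  simp [weight, partWeight]

theorem weight_cons_of_not_even {l : ℕ} (hl : ¬Even l) (R : Multiset ℕ) :
    weight (l ::ₘ R) = oddWeight l * weight R := by
  simp only [weight, oddWeight, hl, Multiset.map_cons, Multiset.prod_cons, Multiset.countP_cons,
    Multiset.filter_cons, if_false, add_zero, Multiset.zero_add, mul_assoc]

theorem weight_cons_cons_of_even {O : Multiset ℕ} (hO : O.countP Even = 0) (p q : ℕ) :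
    weight ((2 * p) ::ₘ (2 * q) ::ₘ O) =
      weight O * (partWeight (2 * p) * partWeight (2 * q) * (2 / (p + q))) := by
  have hfilter : O.filter Even = 0 := Multiset.filter_eq_nil.2 (Multiset.countP_eq_zero.1 hO)
  simp only [weight, hO, hfilter, Multiset.map_cons, Multiset.prod_cons, Multiset.countP_cons,
    Multiset.filter_cons, even_two_mul, if_true, Multiset.sum_add, Multiset.sum_singleton,
    Multiset.sum_zero]
  rw [if_neg (by omega)]
  push_cast
  rw [add_zero, ← mul_add, show (4 : ℚ) = 2 * 2 by norm_num, mul_div_mul_left _ _ two_ne_zero]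
  ring

/-- The restriction of `weight` to the multisets with exactly `K` odd parts, extended by zero. -/
def weightAt (K : ℕ) (M : Multiset ℕ) : ℚ := if M.countP Odd = K then weight M else 0

end Weight

section Convolution

theorem sum_antidiagonal_two_mul_add {M : Type*} [AddCommMonoid M] (m d e : ℕ) (g : ℕ → ℕ → M)
    (hg : ∀ a b, a + b = 2 * m + d + e → g a b ≠ 0 → (∃ k, a = 2 * k + d) ∧ ∃ k, b = 2 * k + e) :
    ∑ i ∈ antidiagonal (2 * m + d + e), g i.1 i.2 =
      ∑ i ∈ antidiagonal m, g (2 * i.1 + d) (2 * i.2 + e) := by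
  symm
  refine sum_of_injOn (fun i => (2 * i.1 + d, 2 * i.2 + e)) ?_ ?_ ?_ fun _ _ => rfl
  · rintro ⟨a, b⟩ - ⟨a', b'⟩ - h
    simp only [Prod.mk.injEq] at h ⊢
    omega
  · rintro ⟨a, b⟩ h
    simp only [mem_coe, HasAntidiagonal.mem_antidiagonal] at h ⊢
    omega
  · rintro ⟨a, b⟩ h hnot
    rw [HasAntidiagonal.mem_antidiagonal] at h
    by_contra hne
    obtain ⟨⟨k, rfl⟩, l, rfl⟩ := hg a b h hne
    exact hnot ⟨(k, l), by simp only [mem_coe, HasAntidiagonal.mem_antidiagonal]; omega, rfl⟩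

theorem sum_antidiagonal_add_sum_antidiagonal {M : Type*} [AddCommMonoid M] (g : ℕ → ℕ → M)
    (a b : ℕ) :
    ∑ i ∈ antidiagonal a, g i.1 (i.2 + b) + ∑ i ∈ antidiagonal b, g (i.2 + a) i.1 =
      ∑ i ∈ antidiagonal (a + b), g i.1 i.2 + g a b := by
  rw [← Nat.sum_antidiagonal_swap (n := b)]
  simp only [Prod.fst_swap, Prod.snd_swap]
  rw [Nat.sum_antidiagonal_eq_sum_range_succ (fun k l => g k (l + b)),
    Nat.sum_antidiagonal_eq_sum_range_succ (fun k l => g (k + a) l),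
    Nat.sum_antidiagonal_eq_sum_range_succ g, sum_range_succ' _ b,
    show (a + b).succ = a.succ + b by omega, sum_range_add, ← add_assoc, zero_add, Nat.sub_zero]
  congr 2 <;> refine sum_congr rfl fun i hi => ?_ <;> rw [mem_range] at hi <;> congr 1 <;> omega

theorem sum_antidiagonal_oddWeight_mul_oddWeight (m : ℕ) :
    ∑ i ∈ antidiagonal (2 * m + 2), oddWeight i.1 * oddWeight i.2 = abelTerm 2 2 m := by
  rw [sum_antidiagonal_two_mul_add m 1 1 (fun a b => oddWeight a * oddWeight b)]
  · simp only [oddWeight_two_mul_add_one]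
    rw [sum_antidiagonal_abelTerm_mul_abelTerm, one_add_one_eq_two]
  · exact fun a b _ h => ⟨exists_eq_of_oddWeight_ne_zero (left_ne_zero_of_mul h),
      exists_eq_of_oddWeight_ne_zero (right_ne_zero_of_mul h)⟩

theorem exists_eq_of_sum_antidiagonal_oddWeight_ne_zero {n : ℕ}
    (h : ∑ i ∈ antidiagonal n, oddWeight i.1 * oddWeight i.2 ≠ 0) : ∃ k, n = 2 * k + 2 := by
  obtain ⟨i, hi, hne⟩ := exists_ne_zero_of_sum_ne_zero h
  obtain ⟨a, ha⟩ := exists_eq_of_oddWeight_ne_zero (left_ne_zero_of_mul hne)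
  obtain ⟨b, hb⟩ := exists_eq_of_oddWeight_ne_zero (right_ne_zero_of_mul hne)
  exact ⟨a + b, by rw [← HasAntidiagonal.mem_antidiagonal.1 hi]; omega⟩

theorem sum_antidiagonal_oddWeight_mul_sum (m : ℕ) :
    ∑ i ∈ antidiagonal (2 * m + 3), oddWeight i.1 *
      ∑ j ∈ antidiagonal i.2, oddWeight j.1 * oddWeight j.2 = abelTerm 2 3 m := by
  rw [sum_antidiagonal_two_mul_add m 1 2
    (fun a b => oddWeight a * ∑ j ∈ antidiagonal b, oddWeight j.1 * oddWeight j.2)]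
  · simp only [oddWeight_two_mul_add_one, sum_antidiagonal_oddWeight_mul_oddWeight]
    rw [sum_antidiagonal_abelTerm_mul_abelTerm, show (1 + 2 : ℚ) = 3 by norm_num]
  · exact fun a b _ h => ⟨exists_eq_of_oddWeight_ne_zero (left_ne_zero_of_mul h),
      exists_eq_of_sum_antidiagonal_oddWeight_ne_zero (right_ne_zero_of_mul h)⟩

end Convolution

section MoveSum

theorem weightAt_cons_cons_cons_of_odd {K a b c : ℕ} {R : Multiset ℕ} (hK : K = R.countP Odd + 3) :
    weightAt K (a ::ₘ b ::ₘ c ::ₘ R) =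
      weight R * (oddWeight a * (oddWeight b * oddWeight c)) := by
  simp only [weightAt, countP_odd_cons]
  split_ifs with hodd
  · rw [weight_cons_of_not_even, weight_cons_of_not_even, weight_cons_of_not_even]
    · ring
    all_goals rw [Nat.even_iff]; omega
  · have : Even a ∨ Even b ∨ Even c := by simp only [Nat.even_iff]; omega
    rcases this with h | h | h <;> simp [oddWeight, h]

theorem mul_splitSum_of_odd (k : ℕ) (R : Multiset ℕ) :
    (2 * k + 1) * splitSum (weightAt (((2 * k + 1) ::ₘ R).countP Odd + 2)) (2 * k + 1) R =
      3 * k * weight ((2 * k + 1) ::ₘ R) := by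
  have hK : ((2 * k + 1) ::ₘ R).countP Odd + 2 = R.countP Odd + 3 := by
    rw [countP_odd_cons]; omega
  simp only [splitSum, weightAt_cons_cons_cons_of_odd hK, ← mul_sum]
  cases k with
  | zero => simp [Nat.antidiagonal_succ, oddWeight]
  | succ k =>
    rw [show 2 * (k + 1) + 1 = 2 * k + 3 by ring, sum_antidiagonal_oddWeight_mul_sum,
      weight_cons_of_not_even (by rw [Nat.even_iff]; omega),
      show 2 * k + 3 = 2 * (k + 1) + 1 by ring, oddWeight_two_mul_add_one]
    have hpow := abelTerm_mul_pow (2 : ℚ) 3 (k := k) (l := 1) (m := k) rfl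
    rw [show (3 + k * 2 : ℚ) = 1 + (k + 1) * 2 by ring] at hpow
    rw [abelTerm, Nat.factorial_succ]
    push_cast
    field_simp at hpow ⊢
    linear_combination weight R * hpow

theorem weightAt_cons_cons_cons_of_even {K a b c : ℕ} {R : Multiset ℕ} (hK : K = R.countP Odd + 2)
    (heven : Even (a + b + c)) :
    weightAt K (a ::ₘ b ::ₘ c ::ₘ R) =
      oddWeight a * oddWeight b * weight (c ::ₘ R) + oddWeight a * oddWeight c * weight (b ::ₘ R) +
        oddWeight b * oddWeight c * weight (a ::ₘ R) := by
  have hcons {l : ℕ} (hl : l % 2 = 1) (S : Multiset ℕ) :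
      weight (l ::ₘ S) = oddWeight l * weight S :=
    weight_cons_of_not_even (by rw [Nat.even_iff]; omega) S
  have hzero {l : ℕ} (hl : l % 2 = 0) : oddWeight l = 0 := if_pos (Nat.even_iff.2 hl)
  rw [Nat.even_iff] at heven
  simp only [weightAt, countP_odd_cons]
  rcases Nat.mod_two_eq_zero_or_one a with ha | ha <;>
    rcases Nat.mod_two_eq_zero_or_one b with hb | hb
  · rw [if_neg (by omega), hzero ha, hzero hb]
    ring
  · rw [if_pos (by omega), Multiset.cons_swap, hcons hb, Multiset.cons_swap, hcons (by omega),
      hzero ha]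
    ring
  · rw [if_pos (by omega), hcons ha, Multiset.cons_swap, hcons (by omega), hzero hb]
    ring
  · rw [if_pos (by omega), hcons ha, hcons hb, hzero (l := c) (by omega)]
    ring

theorem sum_antidiagonal_oddWeight_mul (p : ℕ) (g : ℕ → ℚ) :
    ∑ i ∈ antidiagonal (2 * (p + 1)),
      (∑ j ∈ antidiagonal i.1, oddWeight j.1 * oddWeight j.2) * g i.2 =
      ∑ i ∈ antidiagonal p, abelTerm 2 2 i.1 * g (2 * i.2) := by
  rw [show 2 * (p + 1) = 2 * p + 2 + 0 from rfl, sum_antidiagonal_two_mul_add p 2 0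
    (fun a b => (∑ j ∈ antidiagonal a, oddWeight j.1 * oddWeight j.2) * g b)]
  · simp only [sum_antidiagonal_oddWeight_mul_oddWeight, add_zero]
  · intro a b hab h
    obtain ⟨k, rfl⟩ := exists_eq_of_sum_antidiagonal_oddWeight_ne_zero (left_ne_zero_of_mul h)
    exact ⟨⟨k, rfl⟩, p - k, by omega⟩

theorem splitSum_of_even {K : ℕ} (p : ℕ) {R : Multiset ℕ} (hK : K = R.countP Odd + 2) :
    splitSum (weightAt K) (2 * (p + 1)) R =
      3 * ∑ i ∈ antidiagonal p, abelTerm 2 2 i.1 * weight ((2 * i.2) ::ₘ R) := by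
  set g : ℕ → ℕ → ℕ → ℚ := fun a b c => oddWeight a * oddWeight b * weight (c ::ₘ R) with hg
  have hsplit : splitSum (weightAt K) (2 * (p + 1)) R = ∑ i ∈ antidiagonal (2 * (p + 1)),
      ∑ j ∈ antidiagonal i.2, (g i.1 j.1 j.2 + g i.1 j.2 j.1 + g j.1 j.2 i.1) :=
    sum_congr rfl fun i hi => sum_congr rfl fun j hj =>
      weightAt_cons_cons_cons_of_even hK <| by
        rw [HasAntidiagonal.mem_antidiagonal] at hi hj
        rw [Nat.even_iff]
        omega
  have hassoc := sum_antidiagonal_assoc (2 * (p + 1)) g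
  have hswap : ∑ i ∈ antidiagonal (2 * (p + 1)), ∑ j ∈ antidiagonal i.2, g i.1 j.2 j.1 =
      ∑ i ∈ antidiagonal (2 * (p + 1)), ∑ j ∈ antidiagonal i.2, g i.1 j.1 j.2 :=
    sum_congr rfl fun i _ => Nat.sum_antidiagonal_swap (f := fun j => g i.1 j.1 j.2)
  have hrotate : ∑ i ∈ antidiagonal (2 * (p + 1)), ∑ j ∈ antidiagonal i.2, g j.1 j.2 i.1 =
      ∑ i ∈ antidiagonal (2 * (p + 1)), ∑ j ∈ antidiagonal i.1, g j.1 j.2 i.2 :=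
    Nat.sum_antidiagonal_swap (f := fun i => ∑ j ∈ antidiagonal i.1, g j.1 j.2 i.2)
  rw [hsplit]
  simp only [sum_add_distrib]
  rw [hswap, hrotate, hassoc]
  simp only [hg, ← sum_mul]
  rw [sum_antidiagonal_oddWeight_mul p fun c => weight (c ::ₘ R)]
  ring

theorem transferSum_eq_zero {K : ℕ} {R : Multiset ℕ} (hK : R.countP Odd + 2 < K) (l l' : ℕ) :
    transferSum (weightAt K) l l' R = 0 :=
  sum_eq_zero fun i _ => if_neg <| by simp only [countP_odd_cons]; omega

theorem transferSum_of_even {K : ℕ} {O : Multiset ℕ} (hK : K = O.countP Odd + 2) (p q : ℕ) :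
    transferSum (weightAt K) (2 * p) (2 * q) O =
      weight O * ∑ i ∈ antidiagonal (2 * p), oddWeight i.1 * oddWeight (i.2 + 2 * q) := by
  rw [transferSum, mul_sum]
  refine sum_congr rfl fun i hi => ?_
  rw [HasAntidiagonal.mem_antidiagonal] at hi
  simp only [weightAt, countP_odd_cons]
  split_ifs with hodd
  · rw [weight_cons_of_not_even, weight_cons_of_not_even]
    · ring
    all_goals rw [Nat.even_iff]; omega
  · rw [oddWeight, if_pos (by rw [Nat.even_iff]; omega), zero_mul, mul_zero]

theorem sum_oddWeight_add_sum_oddWeight (p q : ℕ) :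
    ∑ i ∈ antidiagonal (2 * (p + 1)), oddWeight i.1 * oddWeight (i.2 + 2 * (q + 1)) +
      ∑ i ∈ antidiagonal (2 * (q + 1)), oddWeight i.1 * oddWeight (i.2 + 2 * (p + 1)) =
      abelTerm 2 2 (p + q + 1) := by
  have hadd := sum_antidiagonal_add_sum_antidiagonal (fun a b => oddWeight a * oddWeight b)
    (2 * (p + 1)) (2 * (q + 1))
  have hboundary : oddWeight (2 * (p + 1)) = 0 := if_pos (even_two_mul _)
  simp only [mul_comm (oddWeight (_ + 2 * (p + 1)))] at hadd
  rw [hadd, hboundary, zero_mul, add_zero, ← sum_antidiagonal_oddWeight_mul_oddWeight,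
    show 2 * (p + 1) + 2 * (q + 1) = 2 * (p + q + 1) + 2 by ring]

theorem abelTerm_two_two (n : ℕ) : abelTerm (2 : ℚ) 2 n = 2 ^ n * abelTerm 1 1 n := by
  cases n with
  | zero => simp [abelTerm]
  | succ n =>
    rw [abelTerm, abelTerm, show (2 + (n + 1) * 2 : ℚ) = 2 * (1 + (n + 1) * 1) by ring, mul_pow]
    ring

theorem sum_abelTerm_mul_partWeight (p q : ℕ) :
    ∑ i ∈ antidiagonal p, abelTerm 2 2 i.1 * (partWeight (2 * i.2) * (2 / (i.2 + (q + 1)))) =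
      2 ^ (p + 1) *
        ∑ i ∈ antidiagonal p, abelTerm 1 1 i.1 * (i.2 * selfPow i.2 / (i.2 + (q + 1))) := by
  rw [mul_sum]
  refine sum_congr rfl fun i hi => ?_
  rw [abelTerm_two_two, partWeight_two_mul, ← HasAntidiagonal.mem_antidiagonal.1 hi]
  ring

theorem mul_partWeight_mul_partWeight (p q : ℕ) :
    2 * (p + 1) * partWeight (2 * (q + 1)) * ∑ i ∈ antidiagonal p,
        abelTerm 2 2 i.1 * (partWeight (2 * i.2) * (2 / (i.2 + (q + 1)))) +
      2 * (q + 1) * partWeight (2 * (p + 1)) * ∑ i ∈ antidiagonal q,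
        abelTerm 2 2 i.1 * (partWeight (2 * i.2) * (2 / (i.2 + (p + 1)))) +
      4 * (p + 1) * (q + 1) * abelTerm 2 2 (p + q + 1) =
      2 * partWeight (2 * (p + 1)) * partWeight (2 * (q + 1)) := by
  rw [sum_abelTerm_mul_partWeight, sum_abelTerm_mul_partWeight, abelTerm_two_two,
    partWeight_two_mul, partWeight_two_mul]
  push_cast
  linear_combination 4 * 2 ^ (p + q + 1) * (p + 1) * (q + 1) * sum_abelTerm_mul_selfPow_add_sum p q

theorem cutSum_of_not_even {l : ℕ} (hl : ¬Even l) (R : Multiset ℕ) :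
    cutSum (weightAt ((l ::ₘ R).countP Odd + 2)) l R = 3 * ((l - 1) / 2) * weight (l ::ₘ R) := by
  obtain ⟨k, rfl⟩ := Nat.not_even_iff_odd.1 hl
  have htransfer : ∀ l' ∈ R, (l' : ℚ) * transferSum (weightAt (((2 * k + 1) ::ₘ R).countP Odd + 2))
      (2 * k + 1) l' (R.erase l') = 0 := fun l' _ => by
    have := Multiset.countP_le_of_le Odd (Multiset.erase_le l' R)
    rw [transferSum_eq_zero (by rw [countP_odd_cons]; omega), mul_zero]
  rw [cutSum, Multiset.map_congr rfl htransfer, Multiset.sum_map_zero, mul_zero, add_zero]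
  push_cast
  rw [mul_splitSum_of_odd]
  ring

theorem sum_abelTerm_mul_weight {O : Multiset ℕ} (hO : O.countP Even = 0) (p q : ℕ) :
    ∑ i ∈ antidiagonal p, abelTerm 2 2 i.1 * weight ((2 * i.2) ::ₘ (2 * q) ::ₘ O) =
      weight O * partWeight (2 * q) * ∑ i ∈ antidiagonal p,
        abelTerm 2 2 i.1 * (partWeight (2 * i.2) * (2 / (i.2 + q))) := by
  rw [mul_sum]
  refine sum_congr rfl fun i _ => ?_
  rw [weight_cons_cons_of_even hO]
  ring

theorem cutSum_of_even {O : Multiset ℕ} (hO : O.countP Even = 0) (p q : ℕ) :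
    cutSum (weightAt (O.countP Odd + 2)) (2 * (p + 1)) ((2 * (q + 1)) ::ₘ O) =
      3 * weight O * (2 * (p + 1) * partWeight (2 * (q + 1)) * ∑ i ∈ antidiagonal p,
          abelTerm 2 2 i.1 * (partWeight (2 * i.2) * (2 / (i.2 + (q + 1)))) +
        4 * (p + 1) * (q + 1) * ∑ i ∈ antidiagonal (2 * (p + 1)),
          oddWeight i.1 * oddWeight (i.2 + 2 * (q + 1))) := by
  have htransfer : ∀ l' ∈ O, (l' : ℚ) * transferSum (weightAt (O.countP Odd + 2)) (2 * (p + 1)) l'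
      (((2 * (q + 1)) ::ₘ O).erase l') = 0 := fun l' hl' => by
    have hodd : l' % 2 = 1 := by
      simpa [Nat.even_iff] using Multiset.countP_eq_zero.1 hO l' hl'
    have hcons := countP_odd_cons l' (O.erase l')
    rw [Multiset.cons_erase hl'] at hcons
    rw [Multiset.erase_cons_tail_of_mem hl', transferSum_eq_zero, mul_zero]
    rw [countP_odd_cons]
    omega
  rw [cutSum, Multiset.map_cons, Multiset.sum_cons, Multiset.map_congr rfl htransfer,
    Multiset.sum_map_zero, add_zero, Multiset.erase_cons_head, transferSum_of_even rfl,
    splitSum_of_even p (by rw [countP_odd_cons]; omega)]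
  rw [sum_abelTerm_mul_weight hO]
  push_cast
  ring

theorem sum_map_three_mul_sub_one_div_two {O : Multiset ℕ} (hO : O.countP Even = 0) (c : ℚ) :
    (O.map fun l : ℕ => 3 * ((l - 1) / 2) * c).sum = 3 * ((O.sum - O.countP Odd) / 2) * c := by
  induction O using Multiset.induction_on with
  | empty => simp
  | cons a O ih =>
    rw [countP_even_cons] at hO
    rw [Multiset.map_cons, Multiset.sum_cons, ih (by omega), Multiset.sum_cons, countP_odd_cons,
      show a % 2 = 1 by omega]
    push_cast
    ring

theorem sum_map_cutSum_of_not_even {M O : Multiset ℕ} (hOM : O ≤ M) (hO : O.countP Even = 0) :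
    (O.map fun l => cutSum (weightAt (M.countP Odd + 2)) l (M.erase l)).sum =
      3 * ((O.sum - O.countP Odd) / 2) * weight M := by
  rw [← sum_map_three_mul_sub_one_div_two hO]
  refine congrArg _ (Multiset.map_congr rfl fun l hl => ?_)
  have hcut := cutSum_of_not_even (Multiset.countP_eq_zero.1 hO l hl) (M.erase l)
  rwa [Multiset.cons_erase (Multiset.mem_of_le hOM hl)] at hcut

theorem moveSum_weightAt_cons_cons {O : Multiset ℕ} (hO : O.countP Even = 0) (p q : ℕ) :
    moveSum (weightAt (O.countP Odd + 2)) ((2 * (p + 1)) ::ₘ (2 * (q + 1)) ::ₘ O) =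
      3 * (p + 1 + (q + 1) + (O.sum - O.countP Odd) / 2) *
        weight ((2 * (p + 1)) ::ₘ (2 * (q + 1)) ::ₘ O) := by
  set M := (2 * (p + 1)) ::ₘ (2 * (q + 1)) ::ₘ O with hM
  have hK : M.countP Odd = O.countP Odd := by rw [hM, countP_odd_cons, countP_odd_cons]; omega
  have hOM : O ≤ M := (Multiset.le_cons_self O _).trans (Multiset.le_cons_self _ _)
  have hpart := sum_map_cutSum_of_not_even hOM hO
  have herase : M.erase (2 * (q + 1)) = (2 * (p + 1)) ::ₘ O := by
    rw [hM, Multiset.cons_swap, Multiset.erase_cons_head]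
  have hsum : moveSum (weightAt (O.countP Odd + 2)) M = cutSum (weightAt (O.countP Odd + 2))
      (2 * (p + 1)) ((2 * (q + 1)) ::ₘ O) + (cutSum (weightAt (O.countP Odd + 2)) (2 * (q + 1))
        ((2 * (p + 1)) ::ₘ O) + 3 * ((O.sum - O.countP Odd) / 2) * weight M) := by
    rw [hK] at hpart
    rw [← hpart, moveSum, ← herase]
    nth_rw 2 [hM]
    rw [Multiset.map_cons, Multiset.sum_cons, Multiset.map_cons, Multiset.sum_cons,
      hM, Multiset.erase_cons_head]
  have hcancel : (p + 1 + (q + 1) : ℚ) * (2 / (p + 1 + (q + 1))) = 2 :=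
    mul_div_cancel₀ _ (by positivity)
  rw [hsum, cutSum_of_even hO, cutSum_of_even hO, hM, weight_cons_cons_of_even hO]
  have hidentity := mul_partWeight_mul_partWeight p q
  rw [← sum_oddWeight_add_sum_oddWeight] at hidentity
  push_cast
  linear_combination 3 * weight O * hidentity -
    3 * weight O * (partWeight (2 * (p + 1)) * partWeight (2 * (q + 1))) * hcancel

theorem exists_eq_two_mul_cons_of_countP_even {M : Multiset ℕ} (h0 : 0 ∉ M) {n : ℕ}
    (hM : M.countP Even = n + 1) :
    ∃ p O, M = (2 * (p + 1)) ::ₘ O ∧ O.countP Even = n ∧ 0 ∉ O := by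
  obtain ⟨a, ha, heven⟩ := Multiset.countP_pos.1 (show 0 < M.countP Even by omega)
  obtain ⟨O, rfl⟩ := Multiset.exists_cons_of_mem ha
  obtain ⟨k, rfl⟩ := heven
  rw [countP_even_cons] at hM
  refine ⟨k - 1, O, ?_, by omega, fun h => h0 (Multiset.mem_cons_of_mem h)⟩
  have : k + k ≠ 0 := fun h => h0 (h ▸ ha)
  congr 1
  omega

theorem moveSum_weightAt {M : Multiset ℕ} (h0 : 0 ∉ M)
    (hM : M.countP Even = 0 ∨ M.countP Even = 2) :
    moveSum (weightAt (M.countP Odd + 2)) M = 3 * ((M.sum - M.countP Odd) / 2) * weight M := by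
  rcases hM with hM | hM
  · exact sum_map_cutSum_of_not_even le_rfl hM
  · obtain ⟨p, R, rfl, hR, hR0⟩ := exists_eq_two_mul_cons_of_countP_even h0 hM
    obtain ⟨q, O, rfl, hO, -⟩ := exists_eq_two_mul_cons_of_countP_even hR0 hR
    have hK : ((2 * (p + 1)) ::ₘ (2 * (q + 1)) ::ₘ O).countP Odd = O.countP Odd := by
      rw [countP_odd_cons, countP_odd_cons]; omega
    rw [hK, moveSum_weightAt_cons_cons hO, Multiset.sum_cons, Multiset.sum_cons]
    push_cast
    ring

end MoveSum

/-! ### Counting factorizations -/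

section Count

variable {α : Type*} [Fintype α] [DecidableEq α]

/-- The factorizations of `x` into a product of `m` 3-cycles. -/
abbrev Factorization (m : ℕ) (x : Perm α) : Type _ :=
  {w : Fin m → Perm α // (∀ i, (w i).IsThreeCycle) ∧ (List.ofFn w).prod = x}

theorem card_factorization_zero (x : Perm α) :
    Nat.card (Factorization 0 x) = if x = 1 then 1 else 0 := by
  split_ifs with hx
  · subst hx
    exact Nat.card_eq_one_iff_unique.2 ⟨inferInstance, ⟨⟨![], by simp⟩⟩⟩
  · have : IsEmpty (Factorization 0 x) := ⟨fun w => hx (by simpa using w.2.2.symm)⟩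
    exact Nat.card_of_isEmpty

/-- Separating the first factor of a factorization from the others. -/
def factorizationSuccEquiv (m : ℕ) (x : Perm α) :
    Factorization (m + 1) x ≃
      Σ t : {t : Perm α // t.IsThreeCycle}, Factorization m (t.1⁻¹ * x) where
  toFun w := ⟨⟨w.1 0, w.2.1 0⟩, ⟨Fin.tail w.1, fun i => w.2.1 i.succ, by
    rw [eq_inv_mul_iff_mul_eq, ← List.prod_cons, ← List.ofFn_cons, Fin.cons_self_tail, w.2.2]⟩⟩
  invFun s := ⟨Fin.cons s.1.1 s.2.1, Fin.cons s.1.2 s.2.2.1, by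
    rw [List.ofFn_cons, List.prod_cons, s.2.2.2, mul_inv_cancel_left]⟩
  left_inv w := Subtype.ext (Fin.cons_self_tail w.1)
  right_inv _ := rfl

theorem card_factorization_succ (m : ℕ) (x : Perm α) :
    Nat.card (Factorization (m + 1) x) =
      ∑ t : Perm α with t.IsThreeCycle, Nat.card (Factorization m (t⁻¹ * x)) := by
  rw [Nat.card_congr (factorizationSuccEquiv m x), Nat.card_sigma,
    sum_subtype _ fun _ => mem_filter_univ _]

theorem countP_odd_replicate_one (n : ℕ) : (Multiset.replicate n 1).countP Odd = n := by
  rw [Multiset.countP_eq_card.2 fun a ha => Multiset.eq_of_mem_replicate ha ▸ odd_one,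
    Multiset.card_replicate]

theorem countP_even_replicate_one (n : ℕ) : (Multiset.replicate n 1).countP Even = 0 :=
  Multiset.countP_eq_zero.2 fun _ ha => Multiset.eq_of_mem_replicate ha ▸ Nat.not_even_one

theorem weight_replicate_one (n : ℕ) : weight (Multiset.replicate n 1) = 1 := by
  rw [weight, countP_even_replicate_one, if_pos rfl]
  simp [partWeight, abelTerm]

theorem parts_partition_one :
    (1 : Perm α).partition.parts = Multiset.replicate (Fintype.card α) 1 := by
  simp [parts_partition]

theorem eq_one_of_countP_odd_parts {x : Perm α}
    (hx : x.partition.parts.countP Odd = Fintype.card α) : x = 1 := by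
  have hcount := Multiset.countP_le_card Odd x.partition.parts
  have hsupport := card_le_univ x.support
  have htype := Multiset.card_nsmul_le_sum fun a ha => two_le_of_mem_cycleType (σ := x) (n := a) ha
  rw [hx, parts_partition, Multiset.card_add, Multiset.card_replicate] at hcount
  rw [sum_cycleType, smul_eq_mul] at htype
  rw [← card_cycleType_eq_zero]
  omega

theorem card_factorization_eq_zero {m : ℕ} {x : Perm α}
    (hm : x.partition.parts.countP Odd + 2 * m < Fintype.card α) :
    Nat.card (Factorization m x) = 0 := by
  induction m generalizing x with
  | zero =>
    rw [card_factorization_zero, if_neg]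
    rintro rfl
    rw [parts_partition_one, countP_odd_replicate_one] at hm
    omega
  | succ m ih =>
    rw [card_factorization_succ]
    refine sum_eq_zero fun t ht => ih ?_
    have := (threeCycleMove_inv_mul (mem_filter.1 ht).2 x).countP_odd_le
    omega

theorem three_mul_sum_weightAt {x : Perm α}
    (hx : x.partition.parts.countP Even = 0 ∨ x.partition.parts.countP Even = 2) :
    3 * ∑ t with t.IsThreeCycle,
        weightAt (x.partition.parts.countP Odd + 2) (t⁻¹ * x).partition.parts =
      3 * ((Fintype.card α - x.partition.parts.countP Odd) / 2) * weight x.partition.parts := by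
  have h0 : 0 ∉ x.partition.parts := fun h => (x.partition.parts_pos h).ne rfl
  rw [three_mul_sum_parts_inv_mul, moveSum_weightAt h0 hx, x.partition.parts_sum]
  · exact if_neg (by omega)
  · intro R
    rw [weightAt, weight_zero_cons, ite_self]
  · intro a b c R h
    refine if_neg ?_
    rw [h]
    simp only [countP_odd_cons]
    omega

theorem card_factorization {m : ℕ} {x : Perm α}
    (hm : x.partition.parts.countP Odd + 2 * m = Fintype.card α)
    (hx : x.partition.parts.countP Even = 0 ∨ x.partition.parts.countP Even = 2) :
    (Nat.card (Factorization m x) : ℚ) = m ! * weight x.partition.parts := by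
  induction m generalizing x with
  | zero =>
    obtain rfl : x = 1 := eq_one_of_countP_odd_parts hm
    rw [card_factorization_zero, if_pos rfl, parts_partition_one, weight_replicate_one]
    simp
  | succ m ih =>
    have hterm : ∀ t ∈ ({t | t.IsThreeCycle} : Finset (Perm α)),
        (Nat.card (Factorization m (t⁻¹ * x)) : ℚ) =
          m ! * weightAt (x.partition.parts.countP Odd + 2) (t⁻¹ * x).partition.parts :=
      fun t ht => by
        have hmove := threeCycleMove_inv_mul (mem_filter.1 ht).2 x
        have hle := hmove.countP_odd_le
        rw [weightAt]
        split_ifs with hodd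
        · have heven := hmove.countP_even hodd
          exact ih (by omega) (by omega)
        · rw [card_factorization_eq_zero (by omega), Nat.cast_zero, mul_zero]
    have hcard : (Fintype.card α : ℚ) = x.partition.parts.countP Odd + 2 * (m + 1) :=
      mod_cast hm.symm
    have hsum := three_mul_sum_weightAt hx
    rw [hcard] at hsum
    rw [card_factorization_succ, Nat.cast_sum, sum_congr rfl hterm, ← mul_sum, Nat.factorial_succ]
    push_cast
    linear_combination (m ! : ℚ) / 3 * hsum

theorem parts_partition_mul_of_isCycle {a b : Perm α} (ha : a.IsCycle) (hb : b.IsCycle)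
    (hab : a.Disjoint b) :
    (a * b).partition.parts = #a.support ::ₘ #b.support ::ₘ
      Multiset.replicate (Fintype.card α - (#a.support + #b.support)) 1 := by
  rw [parts_partition, hab.cycleType_mul, ha.cycleType, hb.cycleType, hab.card_support_mul]
  rfl

theorem partWeight_two_mul_mul_factorial {p : ℕ} (hp : p ≠ 0) :
    partWeight (2 * p) * (p - 1)! = (2 * p) ^ p := by
  rw [partWeight_two_mul, selfPow, mul_pow, ← Nat.mul_factorial_pred hp]
  push_cast
  field_simp

end Count

end ThreeCycleFactorization

open ThreeCycleFactorization

open scoped Nat in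
theorem stmt18_general {α : Type*} [Fintype α] [DecidableEq α] {p q : ℕ} {a b : Perm α}
    (ha : a.IsCycle) (hb : b.IsCycle) (hacard : a.support.card = 2 * p)
    (hbcard : b.support.card = 2 * q) (hdisj : a.Disjoint b) :
    Nat.card {w : Fin (p + q) → Perm α // (∀ i, (w i).IsThreeCycle) ∧ (List.ofFn w).prod = a * b} *
      ((p - 1)! * (q - 1)!) = 2 * (p + q - 1)! * (2 * p) ^ p * (2 * q) ^ q := by
  have hp : p ≠ 0 := by have := ha.two_le_card_support; omega
  have hq : q ≠ 0 := by have := hb.two_le_card_support; omega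
  have hparts := parts_partition_mul_of_isCycle ha hb hdisj
  rw [hacard, hbcard] at hparts
  have hle : 2 * p + 2 * q ≤ Fintype.card α := by
    rw [← hacard, ← hbcard, ← hdisj.card_support_mul]
    exact Finset.card_le_univ _
  have hcard := card_factorization (m := p + q) (x := a * b)
    (by rw [hparts, countP_odd_cons, countP_odd_cons, countP_odd_replicate_one]; omega)
    (by rw [hparts, countP_even_cons, countP_even_cons, countP_even_replicate_one]; omega)
  rw [hparts, weight_cons_cons_of_even (countP_even_replicate_one _), weight_replicate_one, one_mul,
    ← Nat.mul_factorial_pred (show p + q ≠ 0 by omega)] at hcard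
  rw [← Nat.cast_inj (R := ℚ)]
  push_cast at hcard ⊢
  rw [hcard, ← partWeight_two_mul_mul_factorial hp, ← partWeight_two_mul_mul_factorial hq]
  have : (p + q : ℚ) ≠ 0 := mod_cast (show p + q ≠ 0 by omega)
  field_simp

theorem stmt18 (p q : ℕ) (hq : 1 ≤ q) (hpq : q ≤ p)
    (a b : Perm (Fin (2*(p+q))))
    (ha : a.IsCycle) (hb : b.IsCycle)
    (hacard : a.support.card = 2*p) (hbcard : b.support.card = 2*q)
    (hdisj : a.Disjoint b) :
    Nat.card {w : Fin (p+q) → Perm (Fin (2*(p+q))) //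
        (∀ i, (w i).IsThreeCycle) ∧ (List.ofFn w).prod = a * b}
      * ((p-1).factorial * (q-1).factorial)
      = 2 * (p+q-1).factorial * (2*p)^p * (2*q)^q :=
  stmt18_general ha hb hacard hbcard hdisj
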